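/- arXiv:1903.03331 — 3 statements merged into one kernel-verified Lean document; each statement's English description precedes it below -/
import Mathlib

section
/- (Demotion) Let φ and ψ be GLP formulas, let s : mod(φ∧ψ) → ω be the strictly increasing enumeration of the finite set of ordinals occurring as modality indices in φ∧ψ, and let φ̄ and ψ̄ be obtained from φ and ψ by replacing every modality index ξ by s(ξ). If ⊢_GLP φ → ψ, then ⊢_{GLP_ω} φ̄ → ψ̄. -/
/-- Formulas of polymodal provability logic GLP: propositional variables, ⊤,
Boolean connectives, and a modality `[ξ]` for each ordinal `ξ`. -/
inductive GLPFormula : Type 1 where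
  | var : ℕ → GLPFormula
  | top : GLPFormula
  | neg : GLPFormula → GLPFormula
  | and : GLPFormula → GLPFormula → GLPFormula
  | imp : GLPFormula → GLPFormula → GLPFormula
  | box : Ordinal → GLPFormula → GLPFormula

namespace GLPFormula

/-- `⟨ξ⟩φ` abbreviates `¬[ξ]¬φ`. -/
def dia (ξ : Ordinal) (φ : GLPFormula) : GLPFormula := neg (box ξ (neg φ))

/-- Biconditional, defined from the other connectives. -/
def biimp (φ ψ : GLPFormula) : GLPFormula := and (imp φ ψ) (imp ψ φ)

/-- The set of ordinals occurring as modality indices in a formula. -/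
def mods : GLPFormula → Set Ordinal
  | var _ => ∅
  | top => ∅
  | neg φ => mods φ
  | and φ ψ => mods φ ∪ mods ψ
  | imp φ ψ => mods φ ∪ mods ψ
  | box ξ φ => insert ξ (mods φ)

end GLPFormula

/-- A propositional tautology: true under every Boolean valuation that respects
the Boolean connectives (variables and boxed formulas are treated as atoms). -/
def IsTautology (φ : GLPFormula) : Prop :=
  ∀ v : GLPFormula → Bool,
    v GLPFormula.top = true →
    (∀ ψ, v ψ.neg = !v ψ) →
    (∀ ψ χ, v (ψ.and χ) = (v ψ && v χ)) →
    (∀ ψ χ, v (ψ.imp χ) = (!v ψ || v χ)) →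
    v φ = true

/-- Derivability in GLP, with modality indices restricted to the set `S`
(`S = Set.univ` gives full GLP; `S = Set.Iio ω` gives GLP_ω). -/
inductive GLPProof (S : Set Ordinal) : GLPFormula → Prop where
  | taut {φ} : φ.mods ⊆ S → IsTautology φ → GLPProof S φ
  | distr {ξ φ ψ} : ξ ∈ S → φ.mods ⊆ S → ψ.mods ⊆ S →
      GLPProof S ((GLPFormula.box ξ (φ.imp ψ)).imp
        ((GLPFormula.box ξ φ).imp (GLPFormula.box ξ ψ)))
  | trans {ξ φ} : ξ ∈ S → φ.mods ⊆ S →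
      GLPProof S ((GLPFormula.box ξ φ).imp (GLPFormula.box ξ (GLPFormula.box ξ φ)))
  | lob {ξ φ} : ξ ∈ S → φ.mods ⊆ S →
      GLPProof S ((GLPFormula.box ξ ((GLPFormula.box ξ φ).imp φ)).imp (GLPFormula.box ξ φ))
  | negIntro {ξ ζ φ} : ξ < ζ → ξ ∈ S → ζ ∈ S → φ.mods ⊆ S →
      GLPProof S ((GLPFormula.dia ζ φ).imp (GLPFormula.dia ξ φ))
  | mono {ξ ζ φ} : ξ < ζ → ξ ∈ S → ζ ∈ S → φ.mods ⊆ S →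
      GLPProof S ((GLPFormula.dia ξ φ).imp (GLPFormula.box ζ (GLPFormula.dia ξ φ)))
  | mp {φ ψ} : GLPProof S (φ.imp ψ) → GLPProof S φ → GLPProof S ψ
  | nec {ξ φ} : ξ ∈ S → GLPProof S φ → GLPProof S (GLPFormula.box ξ φ)

/-- Derivability in full GLP (modalities indexed by all ordinals). -/
def GLPProves (φ : GLPFormula) : Prop := GLPProof Set.univ φ

/-- Derivability in GLP_ω (modalities indexed by natural numbers). -/
def GLPomegaProves (φ : GLPFormula) : Prop := GLPProof (Set.Iio Ordinal.omega0) φ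

/-- A GLP_ω formula: all modality indices are below ω. -/
def IsOmegaFormula (φ : GLPFormula) : Prop := φ.mods ⊆ Set.Iio Ordinal.omega0

/-- Conjunction of a finite list of formulas. -/
def listConj : List GLPFormula → GLPFormula
  | [] => GLPFormula.top
  | φ :: l => φ.and (listConj l)

/-- `SetProves S τ χ`: the set `τ` proves `χ`, i.e. `ψ₁ ∧ … ∧ ψₘ → χ` is
derivable for some finite list of members of `τ`. -/
def SetProves (S : Set Ordinal) (τ : Set GLPFormula) (χ : GLPFormula) : Prop :=
  ∃ l : List GLPFormula, (∀ ψ ∈ l, ψ ∈ τ) ∧ GLPProof S ((listConj l).imp χ)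

/-- The iterated consistency formulas: `Q n 0 φ = ⊤`, `Q n (k+1) φ = ⟨n⟩(φ ∧ Q n k φ)`. -/
def Q (n : Ordinal) : ℕ → GLPFormula → GLPFormula
  | 0, _ => GLPFormula.top
  | k + 1, φ => GLPFormula.dia n ((GLPFormula.and φ (Q n k φ)))

/-- `diaPow n k φ` is `⟨n⟩^k φ`, `k` iterated applications of `⟨n⟩`. -/
def diaPow (n : Ordinal) : ℕ → GLPFormula → GLPFormula
  | 0, φ => φ
  | k + 1, φ => GLPFormula.dia n (diaPow n k φ)

/-- The formula corresponding to a worm, given as its list of modality indices: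
`[] ↦ ⊤` and `γ :: A ↦ ⟨γ⟩A`. -/
def wormFormula : List Ordinal → GLPFormula
  | [] => GLPFormula.top
  | γ :: A => GLPFormula.dia γ (wormFormula A)

/-- The generalized `Q`-formula: `Q(⊤,φ) = ⊤`, `Q(⟨γ⟩A, φ) = ⟨γ⟩(φ ∧ Q(A,φ))`. -/
def QWorm : List Ordinal → GLPFormula → GLPFormula
  | [], _ => GLPFormula.top
  | γ :: A, φ => GLPFormula.dia γ (GLPFormula.and φ (QWorm A φ))

/-- Replace every modality index `ξ` of a formula by `s ξ`. -/
def relabel (s : Ordinal → Ordinal) : GLPFormula → GLPFormula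
  | .var p => .var p
  | .top => .top
  | .neg φ => .neg (relabel s φ)
  | .and φ ψ => .and (relabel s φ) (relabel s ψ)
  | .imp φ ψ => .imp (relabel s φ) (relabel s ψ)
  | .box ξ φ => .box (s ξ) (relabel s φ)

/-!
Take a derivation that uses the modalities in a finite set `T` and one further modality `k` that
does not occur in its conclusion. Reinterpreting `[k]` turns it into a derivation over `T`.

* If `k` is above all of `T`, read `[k]a` as `⊤`.
* If `k` is below all of `T` and `h` is the least element of `T`, let `[k]a` be true or false
  according to whether `a`, read in the same way, follows from `[h]X`, where `X` is the conjunction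
  of the relevant formulas that are decided to be true. The definition is circular: its finite
  stages decrease on the finitely many relevant formulas, and where they are stationary `[h]X → X`
  holds, hence `X` by Löb's rule.
* If `k` has a predecessor `j` in `T`, read `[k]` as `[j]`, weakened so that the finitely many
  relevant formulas `⟨j⟩a` imply their own box. These formulas contain `[k]` themselves, so the
  reading is defined by a system of equations, which is solved by the fixed points of GL.

Removing modalities one at a time, a theorem `φ` of GLP is derivable with the modalities that occur
in `φ`, and a strictly monotone relabelling carries such a derivation over axiom by axiom.
-/

namespace GLPProof

variable {S : Set Ordinal.{0}} {a b c d : GLPFormula} {i j : Ordinal.{0}}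

theorem mods_subset (h : GLPProof S a) : a.mods ⊆ S := by
  induction h with
  | taut ha _ => exact ha
  | distr hi ha hb =>
    simp only [GLPFormula.mods, Set.union_subset_iff, Set.insert_subset_iff]
    exact ⟨⟨hi, ha, hb⟩, ⟨hi, ha⟩, hi, hb⟩
  | trans hi ha | lob hi ha =>
    simp only [GLPFormula.mods, Set.union_subset_iff, Set.insert_subset_iff]
    tauto
  | negIntro _ hi hj ha | mono _ hi hj ha =>
    simp only [GLPFormula.mods, GLPFormula.dia, Set.union_subset_iff, Set.insert_subset_iff]
    tauto
  | mp _ _ ihab _ => exact (Set.union_subset_iff.1 ihab).2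
  | nec hi _ ih => exact Set.insert_subset hi ih

theorem taut_mp₃ (ha : GLPProof S a) (hb : GLPProof S b) (hc : GLPProof S c) (hd : d.mods ⊆ S)
    (h : IsTautology (a.imp (b.imp (c.imp d)))) : GLPProof S d := by
  refine mp (mp (mp (taut ?_ h) ha) hb) hc
  simp only [GLPFormula.mods, Set.union_subset_iff]
  exact ⟨ha.mods_subset, hb.mods_subset, hc.mods_subset, hd⟩

theorem box_imp_box (hi : i ∈ S) (h : GLPProof S (a.imp b)) :
    GLPProof S ((a.box i).imp (b.box i)) :=
  have hab := Set.union_subset_iff.1 h.mods_subset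
  mp (distr hi hab.1 hab.2) (nec hi h)

theorem imp_neg_neg (ha : a.mods ⊆ S) : GLPProof S (a.imp a.neg.neg) :=
  taut (Set.union_subset ha ha) fun v _ hneg _ himp => by simp [hneg, himp]

theorem neg_neg_imp (ha : a.mods ⊆ S) : GLPProof S (a.neg.neg.imp a) :=
  taut (Set.union_subset ha ha) fun v _ hneg _ himp => by simp [hneg, himp]

theorem box_le (hij : i < j) (hi : i ∈ S) (hj : j ∈ S) (ha : a.mods ⊆ S) :
    GLPProof S ((a.box i).imp (a.box j)) := by
  refine taut_mp₃ (box_imp_box hi (imp_neg_neg ha)) (negIntro (φ := a.neg) hij hi hj ha)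
    (box_imp_box hj (neg_neg_imp ha))
    (Set.union_subset (Set.insert_subset hi ha) (Set.insert_subset hj ha)) ?_
  intro v _ hneg _ himp
  simp only [GLPFormula.dia, hneg, himp]
  grind

theorem box_neg (hij : i < j) (hi : i ∈ S) (hj : j ∈ S) (ha : a.mods ⊆ S) :
    GLPProof S ((a.box i).neg.imp ((a.box i).neg.box j)) := by
  have hbox : GLPProof S ((a.neg.neg.box i).imp (a.box i)) := box_imp_box hi (neg_neg_imp ha)
  have hbox' : GLPProof S ((a.neg.dia i).imp (a.box i).neg) := by
    refine taut_mp₃ (box_imp_box hi (imp_neg_neg ha)) hbox hbox ?_ ?_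
    · exact Set.union_subset (Set.insert_subset hi ha) (Set.insert_subset hi ha)
    · intro v _ hneg _ himp
      simp only [GLPFormula.dia, hneg, himp]
      grind
  refine taut_mp₃ hbox (mono (φ := a.neg) hij hi hj ha) (box_imp_box hj hbox')
    (Set.union_subset (Set.insert_subset hi ha) (Set.insert_subset hj (Set.insert_subset hi ha)))
    ?_
  intro v _ hneg _ himp
  simp only [GLPFormula.dia, hneg, himp]
  grind

end GLPProof

/-! ### Formulas and translations -/

universe u v

/-- Polymodal formulas whose modality indices range over `I` and whose propositional
variables range over `V`. The connectives are those of `GLPFormula`; arbitrary variables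
leave room for the fresh ones used in the fixed point constructions. -/
inductive ModalFormula (I : Type u) (V : Type v) : Type (max u v) where
  | var : V → ModalFormula I V
  | top : ModalFormula I V
  | neg : ModalFormula I V → ModalFormula I V
  | and : ModalFormula I V → ModalFormula I V → ModalFormula I V
  | imp : ModalFormula I V → ModalFormula I V → ModalFormula I V
  | box : I → ModalFormula I V → ModalFormula I V

namespace ModalFormula

local prefix:max "∼" => neg
local infixr:69 " ⋏ " => and
local infixr:60 " ⇒ " => imp
local notation:max "□[" i "]" a:max => box i a

variable {I V W X : Type*}

/-- The biconditional. -/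
def iff (a b : ModalFormula I V) : ModalFormula I V := (a ⇒ b) ⋏ (b ⇒ a)

local infix:55 " ⇔ " => iff

/-- The set of modality indices occurring in a formula. -/
def mods : ModalFormula I V → Set I
  | var _ => ∅
  | top => ∅
  | neg a => mods a
  | and a b => mods a ∪ mods b
  | imp a b => mods a ∪ mods b
  | box i a => insert i (mods a)

/-- Propositional truth of a formula, when `w` decides the truth of its variables and of
its boxed subformulas; the values of `w` at other formulas do not matter. -/
@[grind]
def eval (w : ModalFormula I V → Prop) : ModalFormula I V → Prop
  | var p => w (var p)
  | top => True
  | neg a => ¬ eval w a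
  | and a b => eval w a ∧ eval w b
  | imp a b => eval w a → eval w b
  | box i a => w □[i] a

/-- The conjunction of a finite list of formulas. -/
def conj : List (ModalFormula I V) → ModalFormula I V
  | [] => top
  | a :: l => a ⋏ conj l

@[grind =]
theorem eval_iff {w : ModalFormula I V → Prop} {a b : ModalFormula I V} :
    eval w (a ⇔ b) ↔ (eval w a ↔ eval w b) := by
  grind [iff]

theorem eval_conj {w : ModalFormula I V → Prop} {l : List (ModalFormula I V)} :
    eval w (conj l) ↔ ∀ a ∈ l, eval w a := by
  induction l with
  | nil => simp [conj, eval]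
  | cons a l ih => simp [conj, eval, ih]

theorem finite_mods (a : ModalFormula I V) : a.mods.Finite := by
  induction a with
  | var | top => exact Set.finite_empty
  | neg _ ih => exact ih
  | and _ _ iha ihb | imp _ _ iha ihb => exact iha.union ihb
  | box i _ ih => exact ih.insert i

/-- The translation that commutes with the connectives, replaces each variable `p` by `g p`
and each `□[i] a` by `f i a a'`, where `a'` is the translation of `a`. -/
def interp (f : I → ModalFormula I V → ModalFormula I W → ModalFormula I W)
    (g : V → ModalFormula I W) : ModalFormula I V → ModalFormula I W
  | var p => g p
  | top => top
  | neg a => ∼(interp f g a)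
  | and a b => interp f g a ⋏ interp f g b
  | imp a b => interp f g a ⇒ interp f g b
  | box i a => f i a (interp f g a)

/-- Substitution of formulas for variables. -/
def subst (σ : V → ModalFormula I W) : ModalFormula I V → ModalFormula I W :=
  interp (fun i _ a' => □[i] a') σ

@[grind =]
theorem subst_neg {σ : V → ModalFormula I W} {a : ModalFormula I V} :
    (∼a).subst σ = ∼(a.subst σ) :=
  rfl

@[grind =]
theorem subst_and {σ : V → ModalFormula I W} {a b : ModalFormula I V} :
    (a ⋏ b).subst σ = (a.subst σ ⋏ b.subst σ) :=
  rfl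

@[grind =]
theorem subst_imp {σ : V → ModalFormula I W} {a b : ModalFormula I V} :
    (a ⇒ b).subst σ = (a.subst σ ⇒ b.subst σ) :=
  rfl

@[grind =]
theorem subst_box {σ : V → ModalFormula I W} {i : I} {a : ModalFormula I V} :
    (□[i]a).subst σ = □[i](a.subst σ) :=
  rfl

section Interp

variable {f f' : I → ModalFormula I V → ModalFormula I W → ModalFormula I W}
  {g : V → ModalFormula I W}

theorem eval_interp {w : ModalFormula I W → Prop} (a : ModalFormula I V) :
    eval w (interp f g a) ↔ eval (fun b => eval w (interp f g b)) a := by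
  induction a with
  | var | top | box => rfl
  | neg _ ih => simp only [interp, eval, ih]
  | and _ _ iha ihb | imp _ _ iha ihb => simp only [interp, eval, iha, ihb]

theorem interp_congr {a : ModalFormula I V} (h : ∀ i ∈ a.mods, f i = f' i) :
    interp f g a = interp f' g a := by
  induction a with
  | var | top => rfl
  | neg _ ih => exact congrArg neg (ih h)
  | and _ _ iha ihb | imp _ _ iha ihb =>
    simp only [interp, iha fun i hi => h i (Or.inl hi), ihb fun i hi => h i (Or.inr hi)]
  | box i _ ih =>
    simp only [interp, ih fun j hj => h j (Or.inr hj), h i (Or.inl rfl)]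

theorem subst_subst (σ : V → ModalFormula I W) (τ : W → ModalFormula I X)
    (a : ModalFormula I V) : subst τ (subst σ a) = subst (fun p => subst τ (σ p)) a := by
  induction a with
  | var | top => rfl
  | neg _ ih => exact congrArg neg ih
  | and _ _ iha ihb => exact congrArg₂ and iha ihb
  | imp _ _ iha ihb => exact congrArg₂ imp iha ihb
  | box i _ ih => exact congrArg (box i) ih

theorem subst_var (a : ModalFormula I V) : subst var a = a := by
  induction a with
  | var | top => rfl
  | neg _ ih => exact congrArg neg ih
  | and _ _ iha ihb => exact congrArg₂ and iha ihb
  | imp _ _ iha ihb => exact congrArg₂ imp iha ihb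
  | box i _ ih => exact congrArg (box i) ih

theorem mods_subst_subset {S : Set I} {σ : V → ModalFormula I W} (hσ : ∀ p, (σ p).mods ⊆ S)
    {a : ModalFormula I V} (ha : a.mods ⊆ S) : (subst σ a).mods ⊆ S := by
  induction a with
  | var p => exact hσ p
  | top => exact Set.empty_subset S
  | neg _ ih => exact ih ha
  | and _ _ iha ihb | imp _ _ iha ihb =>
    exact Set.union_subset (iha (Set.union_subset_iff.1 ha).1) (ihb (Set.union_subset_iff.1 ha).2)
  | box i _ ih =>
    exact Set.insert_subset (Set.insert_subset_iff.1 ha).1 (ih (Set.insert_subset_iff.1 ha).2)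

theorem mods_update_subset [DecidableEq V] {q : V} {d : ModalFormula I V} {S : Set I}
    (hd : d.mods ⊆ S) (p : V) : (Function.update var q d p).mods ⊆ S := by
  obtain rfl | hp := eq_or_ne p q
  · rwa [Function.update_self]
  · rw [Function.update_of_ne hp]
    exact Set.empty_subset S

/-- The fixed point `□[j] a(⊤)` of `□[j] a`, as a formula without the variable `q`. -/
def boxFixedPoint [DecidableEq V] (j : I) (q : V) (a : ModalFormula I V) :
    ModalFormula I V :=
  □[j](a.subst (Function.update var q top))

theorem mods_boxFixedPoint_subset [DecidableEq V] {S : Set I} {j : I} (hj : j ∈ S) (q : V)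
    {a : ModalFormula I V} (ha : a.mods ⊆ S) :
    (boxFixedPoint j q a).mods ⊆ S :=
  Set.insert_subset hj (mods_subst_subset (mods_update_subset (Set.empty_subset S)) ha)

/-- `a` as a formula over the variables `V` and fresh variables `X`. -/
def embed : ModalFormula I V → ModalFormula I (V ⊕ X) :=
  subst fun p => var (Sum.inl p)

theorem subst_embed {a : ModalFormula I V} {σ : V ⊕ X → ModalFormula I W} :
    (embed a).subst σ = a.subst fun p => σ (Sum.inl p) :=
  subst_subst _ _ a

end Interp

/-! ### Derivability over a set of modalities -/

section Derivability

variable [LinearOrder I] {S T : Set I} {E : Set (ModalFormula I V)}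

/-- The axioms of GLP with modalities in `S`. Negative introspection and monotonicity are
stated for boxes, as `[i]φ → [j]φ` and `¬[i]φ → [j]¬[i]φ` for `i < j`. -/
inductive IsAxiom (S : Set I) : ModalFormula I V → Prop where
  | taut {a} : (∀ w, eval w a) → IsAxiom S a
  | distr {i a b} : i ∈ S → IsAxiom S (□[i](a ⇒ b) ⇒ □[i]a ⇒ □[i]b)
  | trans {i a} : i ∈ S → IsAxiom S (□[i]a ⇒ □[i]□[i]a)
  | lob {i a} : i ∈ S → IsAxiom S (□[i](□[i]a ⇒ a) ⇒ □[i]a)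
  | box_le {i j a} : i < j → i ∈ S → j ∈ S → IsAxiom S (□[i]a ⇒ □[j]a)
  | box_neg {i j a} : i < j → i ∈ S → j ∈ S → IsAxiom S (∼□[i]a ⇒ □[j]∼□[i]a)

/-- Derivability in GLP with modalities in `S` from a set `E` of extra axioms, which are
subject to necessitation. -/
inductive Provable (S : Set I) (E : Set (ModalFormula I V)) : ModalFormula I V → Prop where
  | ax {a} : IsAxiom S a → Provable S E a
  | hyp {a} : a ∈ E → Provable S E a
  | mp {a b} : Provable S E (a ⇒ b) → Provable S E a → Provable S E b
  | nec {i a} : i ∈ S → Provable S E a → Provable S E □[i]a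

variable {a b c d e : ModalFormula I V}

namespace Provable

theorem taut (h : ∀ w, eval w a) : Provable S E a :=
  ax (.taut h)

theorem taut_mp (ha : Provable S E a) (h : ∀ w, eval w (a ⇒ b)) : Provable S E b :=
  mp (taut h) ha

theorem taut_mp₂ (ha : Provable S E a) (hb : Provable S E b)
    (h : ∀ w, eval w (a ⇒ b ⇒ c)) : Provable S E c :=
  mp (taut_mp ha h) hb

theorem taut_mp₃ (ha : Provable S E a) (hb : Provable S E b) (hc : Provable S E c)
    (h : ∀ w, eval w (a ⇒ b ⇒ c ⇒ d)) : Provable S E d :=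
  mp (taut_mp₂ ha hb h) hc

theorem taut_mp₄ (ha : Provable S E a) (hb : Provable S E b) (hc : Provable S E c)
    (hd : Provable S E d) (h : ∀ w, eval w (a ⇒ b ⇒ c ⇒ d ⇒ e)) : Provable S E e :=
  mp (taut_mp₃ ha hb hc h) hd

theorem imp_trans (hab : Provable S E (a ⇒ b)) (hbc : Provable S E (b ⇒ c)) :
    Provable S E (a ⇒ c) :=
  taut_mp₂ hab hbc fun _ h h' => h' ∘ h

theorem imp_intro (h : Provable S E b) : Provable S E (a ⇒ b) :=
  taut_mp h fun _ hb _ => hb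

theorem imp_conj {l : List (ModalFormula I V)} (h : ∀ b ∈ l, Provable S E (a ⇒ b)) :
    Provable S E (a ⇒ conj l) := by
  induction l with
  | nil => exact taut fun _ _ => trivial
  | cons b l ih =>
    exact taut_mp₂ (h b List.mem_cons_self) (ih fun c hc => h c (List.mem_cons_of_mem b hc))
      fun _ hb hl ha => ⟨hb ha, hl ha⟩

theorem weaken (h : Provable S E a) (hST : S ⊆ T) {F : Set (ModalFormula I V)}
    (hEF : ∀ b ∈ E, Provable T F b) : Provable T F a := by
  induction h with
  | ax h =>
    cases h with
    | taut h => exact taut h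
    | distr hi => exact ax (.distr (hST hi))
    | trans hi => exact ax (.trans (hST hi))
    | lob hi => exact ax (.lob (hST hi))
    | box_le hij hi hj => exact ax (.box_le hij (hST hi) (hST hj))
    | box_neg hij hi hj => exact ax (.box_neg hij (hST hi) (hST hj))
  | hyp h => exact hEF _ h
  | mp _ _ ihab iha => exact mp ihab iha
  | nec hi _ ih => exact nec (hST hi) ih

theorem mono (h : Provable S E a) (hST : S ⊆ T) {F : Set (ModalFormula I V)} (hEF : E ⊆ F) :
    Provable T F a :=
  weaken h hST fun _ hb => hyp (hEF hb)

theorem subst (σ : V → ModalFormula I W) (h : Provable S E a) :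
    Provable S (ModalFormula.subst σ '' E) (a.subst σ) := by
  induction h with
  | ax h =>
    cases h with
    | taut h => exact taut fun w => (eval_interp _).2 (h _)
    | distr hi => exact ax (.distr hi)
    | trans hi => exact ax (.trans hi)
    | lob hi => exact ax (.lob hi)
    | box_le hij hi hj => exact ax (.box_le hij hi hj)
    | box_neg hij hi hj => exact ax (.box_neg hij hi hj)
  | hyp h => exact hyp (Set.mem_image_of_mem _ h)
  | mp _ _ ihab iha => exact mp ihab iha
  | nec hi _ ih => exact nec hi ih

theorem exists_finite (h : Provable S E a) :
    ∃ S₀ ⊆ S, ∃ E₀ ⊆ E, S₀.Finite ∧ E₀.Finite ∧ Provable S₀ E₀ a := by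
  induction h with
  | @ax a h =>
    suffices ∃ S₀ ⊆ S, S₀.Finite ∧ IsAxiom S₀ a by
      obtain ⟨S₀, hS, hfin, h⟩ := this
      exact ⟨S₀, hS, ∅, Set.empty_subset E, hfin, Set.finite_empty, ax h⟩
    cases h with
    | taut h => exact ⟨∅, Set.empty_subset S, Set.finite_empty, .taut h⟩
    | @distr i _ _ hi =>
      exact ⟨{i}, Set.singleton_subset_iff.2 hi, Set.finite_singleton i, .distr rfl⟩
    | @trans i _ hi =>
      exact ⟨{i}, Set.singleton_subset_iff.2 hi, Set.finite_singleton i, .trans rfl⟩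
    | @lob i _ hi =>
      exact ⟨{i}, Set.singleton_subset_iff.2 hi, Set.finite_singleton i, .lob rfl⟩
    | @box_le i j _ hij hi hj =>
      exact ⟨{i, j}, Set.pair_subset hi hj, Set.toFinite _, .box_le hij (.inl rfl) (.inr rfl)⟩
    | @box_neg i j _ hij hi hj =>
      exact ⟨{i, j}, Set.pair_subset hi hj, Set.toFinite _, .box_neg hij (.inl rfl) (.inr rfl)⟩
  | @hyp a h =>
    exact ⟨∅, Set.empty_subset S, {a}, Set.singleton_subset_iff.2 h, Set.finite_empty,
      Set.finite_singleton a, hyp rfl⟩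
  | mp _ _ ihab iha =>
    obtain ⟨S₁, hS₁, E₁, hE₁, hfS₁, hfE₁, h₁⟩ := ihab
    obtain ⟨S₂, hS₂, E₂, hE₂, hfS₂, hfE₂, h₂⟩ := iha
    exact ⟨S₁ ∪ S₂, Set.union_subset hS₁ hS₂, E₁ ∪ E₂, Set.union_subset hE₁ hE₂,
      hfS₁.union hfS₂, hfE₁.union hfE₂, mp (h₁.mono Set.subset_union_left Set.subset_union_left)
        (h₂.mono Set.subset_union_right Set.subset_union_right)⟩
  | @nec i _ hi _ ih =>
    obtain ⟨S₀, hS, E₀, hE, hfS, hfE, h⟩ := ih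
    exact ⟨insert i S₀, Set.insert_subset hi hS, E₀, hE, hfS.insert i, hfE,
      nec (Set.mem_insert i S₀) (h.mono (Set.subset_insert i S₀) subset_rfl)⟩

end Provable

open Provable

/-- An operator on formulas that behaves, for the logic with modalities in `S` and extra
axioms `E`, like the box of a normal modal logic. -/
structure IsNormal (S : Set I) (E : Set (ModalFormula I V))
    (B : ModalFormula I V → ModalFormula I V) : Prop where
  nec {a : ModalFormula I V} : Provable S E a → Provable S E (B a)
  distr (a b : ModalFormula I V) : Provable S E (B (a ⇒ b) ⇒ B a ⇒ B b)

/-- A normal operator satisfying the axioms of the provability logic GL. -/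
structure IsGL (S : Set I) (E : Set (ModalFormula I V))
    (B : ModalFormula I V → ModalFormula I V) : Prop extends IsNormal S E B where
  trans (a : ModalFormula I V) : Provable S E (B a ⇒ B (B a))
  lob (a : ModalFormula I V) : Provable S E (B (B a ⇒ a) ⇒ B a)

namespace IsNormal

variable {B : ModalFormula I V → ModalFormula I V}

theorem map (hB : IsNormal S E B) (h : Provable S E (a ⇒ b)) : Provable S E (B a ⇒ B b) :=
  .mp (hB.distr a b) (hB.nec h)

theorem map₂ (hB : IsNormal S E B) (h : Provable S E (a ⇒ b ⇒ c)) :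
    Provable S E (B a ⇒ B b ⇒ B c) :=
  (hB.map h).imp_trans (hB.distr b c)

theorem map_taut (hB : IsNormal S E B) (h : ∀ w, eval w (a ⇒ b)) : Provable S E (B a ⇒ B b) :=
  hB.map (taut h)

theorem map₂_taut (hB : IsNormal S E B) (h : ∀ w, eval w (a ⇒ b ⇒ c)) :
    Provable S E (B a ⇒ B b ⇒ B c) :=
  hB.map₂ (taut h)

theorem congr (hB : IsNormal S E B) (h : Provable S E (a ⇔ b)) : Provable S E (B a ⇔ B b) :=
  taut_mp₂ (hB.map (taut_mp h fun _ => And.left)) (hB.map (taut_mp h fun _ => And.right))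
    fun _ => And.intro

end IsNormal

theorem isGL_box {i : I} (hi : i ∈ S) : IsGL S E (box i) where
  nec := nec hi
  distr _ _ := ax (.distr hi)
  trans _ := ax (.trans hi)
  lob _ := ax (.lob hi)

theorem isNormal_box {i : I} (hi : i ∈ S) : IsNormal S E (box i) :=
  (isGL_box hi).toIsNormal

namespace Provable

variable {i j : I}

theorem box_le (hij : i ≤ j) (hi : i ∈ S) (hj : j ∈ S) : Provable S E (□[i]a ⇒ □[j]a) := by
  obtain rfl | hij := hij.eq_or_lt
  · exact taut fun _ => id
  · exact ax (.box_le hij hi hj)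

theorem box_pos (hij : i ≤ j) (hi : i ∈ S) (hj : j ∈ S) : Provable S E (□[i]a ⇒ □[j]□[i]a) :=
  imp_trans (ax (.trans hi)) (box_le hij hi hj)

theorem box_neg (hij : i < j) (hi : i ∈ S) (hj : j ∈ S) :
    Provable S E (∼□[i]a ⇒ □[j]∼□[i]a) :=
  ax (.box_neg hij hi hj)

theorem of_box_imp (hi : i ∈ S) (h : Provable S E (□[i]a ⇒ a)) : Provable S E a :=
  mp h (mp (ax (.lob hi)) (nec hi h))

end Provable

/-! ### Fixed points -/

section FixedPoint

variable {i j : I}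

theorem imp_subst_iff_subst (hj : j ∈ S) {d : ModalFormula I W} {F : Set (ModalFormula I W)}
    (hd : Provable S F (d ⇒ □[j]d)) {σ τ : V → ModalFormula I W}
    (hστ : ∀ p, Provable S F (d ⇒ (σ p ⇔ τ p))) (ha : a.mods ⊆ S ∩ Set.Ici j) :
    Provable S F (d ⇒ (a.subst σ ⇔ a.subst τ)) := by
  induction a with
  | var p => exact hστ p
  | top => exact taut fun _ _ => ⟨id, id⟩
  | neg a ih => exact (ih ha).taut_mp (by grind)
  | and a b iha ihb | imp a b iha ihb =>
    rw [mods, Set.union_subset_iff] at ha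
    exact (iha ha.1).taut_mp₂ (ihb ha.2) (by grind)
  | box i a ih =>
    rw [mods, Set.insert_subset_iff] at ha
    obtain ⟨⟨hi, hji⟩, ha⟩ := ha
    have hbox : Provable S F (d ⇒ □[i](a.subst σ ⇔ a.subst τ)) :=
      (hd.imp_trans (box_le hji hj hi)).imp_trans ((isNormal_box hi).map (ih ha))
    have hστ : Provable S F (□[i](a.subst σ ⇔ a.subst τ) ⇒ □[i](a.subst σ) ⇒ □[i](a.subst τ)) :=
      (isNormal_box hi).map₂_taut (by grind)
    have hτσ : Provable S F (□[i](a.subst σ ⇔ a.subst τ) ⇒ □[i](a.subst τ) ⇒ □[i](a.subst σ)) :=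
      (isNormal_box hi).map₂_taut (by grind)
    exact hbox.taut_mp₃ hστ hτσ (by grind)

theorem box_subst_iff_box_subst (hj : j ∈ S) {σ τ : V → ModalFormula I W}
    {F : Set (ModalFormula I W)} (ha : a.mods ⊆ S ∩ Set.Ici j)
    (hστ : ∀ p, Provable S F (□[j](a.subst σ) ⇒ (σ p ⇔ τ p))) :
    Provable S F (□[j](a.subst σ) ⇔ □[j](a.subst τ)) := by
  have hB : IsGL S F (box j) := isGL_box hj
  have h := imp_subst_iff_subst hj (hB.trans _) hστ ha
  generalize a.subst σ = b at h ⊢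
  generalize a.subst τ = c at h ⊢
  have hbc : Provable S F (□[j]□[j]b ⇒ □[j]b ⇒ □[j]c) := hB.map₂ (h.taut_mp (by grind))
  have hcb : Provable S F (□[j]□[j]b ⇒ □[j]c ⇒ □[j]b) := hB.map₂ (h.taut_mp (by grind))
  have hlob : Provable S F (□[j]c ⇒ □[j]b) :=
    of_box_imp hj ((hB.distr □[j]c □[j]b).taut_mp₃ (hB.trans c) hcb (by grind))
  exact hbc.taut_mp₃ (hB.trans b) hlob (by grind)

theorem boxFixedPoint_iff [DecidableEq V] (hj : j ∈ S) (q : V) (ha : a.mods ⊆ S ∩ Set.Ici j) :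
    Provable S E (boxFixedPoint j q a ⇔
      □[j](a.subst (Function.update var q (boxFixedPoint j q a)))) := by
  refine box_subst_iff_box_subst hj ha fun p => ?_
  obtain rfl | hp := eq_or_ne p q
  · rw [Function.update_self, Function.update_self, boxFixedPoint]
    exact taut (by grind)
  · rw [Function.update_of_ne hp, Function.update_of_ne hp]
    exact taut (by grind)

/-- The equation `x ↔ [ι x] (C x)` for the fresh variable `x`. -/
def fixedPointEq (ι : X → I) (C : X → ModalFormula I (V ⊕ X)) (x : X) : ModalFormula I (V ⊕ X) :=
  var (Sum.inr x) ⇔ □[ι x](C x)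

theorem of_embed (h : Provable S ∅ (embed a : ModalFormula I (V ⊕ X))) : Provable S ∅ a := by
  have := h.subst (Sum.elim var fun _ => top : V ⊕ X → ModalFormula I V)
  simpa only [subst_embed, Sum.elim_inl, subst_var, Set.image_empty] using this

theorem provable_of_fixedPointEq_finset {ι : X → I} {C : X → ModalFormula I (V ⊕ X)}
    {F : Finset X} (hι : ∀ x ∈ F, ι x ∈ S)
    (hC : ∀ x ∈ F, (C x).mods ⊆ {i ∈ S | ∀ y ∈ F, ι y ≤ i})
    (h : Provable S (fixedPointEq ι C '' F) (embed a)) : Provable S ∅ a := by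
  classical
  induction F using Finset.induction_on_max_value ι generalizing C with
  | empty =>
    rw [Finset.coe_empty, Set.image_empty] at h
    exact of_embed h
  | insert x F hxF hmax ih =>
    have hx : x ∈ insert x F := Finset.mem_insert_self x F
    have hF {y} (hy : y ∈ F) : y ∈ insert x F := Finset.mem_insert_of_mem hy
    have hmods {y} (hy : y ∈ insert x F) : (C y).mods ⊆ {i ∈ S | ∀ z ∈ F, ι z ≤ i} :=
      (hC y hy).trans fun i hi => ⟨hi.1, fun z hz => hi.2 z (hF hz)⟩
    let d : ModalFormula I (V ⊕ X) := boxFixedPoint (ι x) (Sum.inr x) (C x)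
    let τ : V ⊕ X → ModalFormula I (V ⊕ X) := Function.update var (Sum.inr x) d
    have hτ {p} (hp : p ≠ Sum.inr x) : τ p = var p := Function.update_of_ne hp d var
    have hd : d.mods ⊆ {i ∈ S | ∀ z ∈ F, ι z ≤ i} :=
      mods_boxFixedPoint_subset (Set.mem_sep (hι x hx) hmax) (Sum.inr x) (hmods hx)
    have hτa : (embed a).subst τ = embed a :=
      subst_embed.trans (by simp only [hτ Sum.inl_ne_inr, embed])
    refine ih (C := fun y => (C y).subst τ) (fun y hy => hι y (hF hy))
      (fun y hy => mods_subst_subset (mods_update_subset hd) (hmods (hF hy))) ?_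
    rw [← hτa]
    refine (h.subst τ).weaken subset_rfl ?_
    rintro _ ⟨_, ⟨y, hy, rfl⟩, rfl⟩
    obtain rfl | hyF := Finset.mem_insert.1 hy
    · change Provable S _ (τ (Sum.inr y) ⇔ □[ι y]((C y).subst τ))
      rw [show τ (Sum.inr y) = d from Function.update_self ..]
      exact boxFixedPoint_iff (hι y hx) (Sum.inr y) fun i hi =>
        ⟨(hC y hx hi).1, (hC y hx hi).2 y hx⟩
    · have hyx : (Sum.inr y : V ⊕ X) ≠ Sum.inr x := by grind
      refine hyp ⟨y, hyF, ?_⟩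
      change _ = (τ (Sum.inr y) ⇔ □[ι y]((C y).subst τ))
      rw [hτ hyx, fixedPointEq]

theorem provable_of_fixedPointEq {ι : X → I} {C : X → ModalFormula I (V ⊕ X)} {P : Set X}
    (hι : ∀ x ∈ P, ι x ∈ S) (hC : ∀ x ∈ P, (C x).mods = ∅)
    (h : Provable S (fixedPointEq ι C '' P) (embed a)) : Provable S ∅ a := by
  obtain ⟨S₀, hS₀, E₀, hE₀, -, hfin, h⟩ := h.exists_finite
  obtain ⟨F, hFP, hfin, h⟩ := Set.exists_subset_image_finite_and
    (p := fun E₀ => Provable S₀ E₀ (embed a)) |>.1 ⟨E₀, hE₀, hfin, h⟩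
  lift F to Finset X using hfin
  refine provable_of_fixedPointEq_finset (fun x hx => hι x (hFP hx)) (fun x hx => ?_)
    (h.mono hS₀ subset_rfl)
  rw [hC x (hFP hx)]
  exact Set.empty_subset _

end FixedPoint

theorem eventually_interp {Λ : Type*} {l : Filter Λ} {E : Λ → Set (ModalFormula I W)}
    {f : Λ → I → ModalFormula I V → ModalFormula I W → ModalFormula I W}
    {g : V → ModalFormula I W} {B : Λ → I → ModalFormula I W → ModalFormula I W}
    (hf : ∀ n, ∀ i ∈ S, ∀ a, Provable T (E n)
      (f n i a (interp (f n) g a) ⇔ B n i (interp (f n) g a)))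
    (hB : ∀ n, ∀ i ∈ S, IsGL T (E n) (B n i))
    (hle : ∀ n, ∀ i ∈ S, ∀ j ∈ S, i < j → ∀ a, Provable T (E n) (B n i a ⇒ B n j a))
    (hneg : ∀ i ∈ S, ∀ j ∈ S, i < j → ∀ a, ∀ᶠ n in l,
      Provable T (E n) (∼(B n i (interp (f n) g a)) ⇒ B n j ∼(B n i (interp (f n) g a))))
    (h : Provable S ∅ a) : ∀ᶠ n in l, Provable T (E n) (interp (f n) g a) := by
  induction h with
  | ax h =>
    cases h with
    | taut h => exact .of_forall fun n => taut fun w => (eval_interp _).2 (h _)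
    | @distr i a b hi =>
      exact .of_forall fun n => (hf n i hi (a ⇒ b)).taut_mp₄ (hf n i hi a) (hf n i hi b)
        ((hB n i hi).distr (interp (f n) g a) (interp (f n) g b)) (by grind [interp])
    | @trans i a hi =>
      refine .of_forall fun n => (hf n i hi a).taut_mp₄ (hf n i hi □[i]a)
        ((hB n i hi).congr (hf n i hi a)) ((hB n i hi).trans (interp (f n) g a)) ?_
      grind [interp]
    | @lob i a hi =>
      have hcongr n := (hB n i hi).map (b := B n i (interp (f n) g a) ⇒ interp (f n) g a)
        ((hf n i hi a).taut_mp (b := interp (f n) g (□[i]a ⇒ a) ⇒ _) (by grind [interp]))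
      refine .of_forall fun n => (hf n i hi a).taut_mp₄ (hf n i hi (□[i]a ⇒ a)) (hcongr n)
        ((hB n i hi).lob (interp (f n) g a)) ?_
      grind [interp]
    | @box_le i j a hij hi hj =>
      refine .of_forall fun n => (hf n i hi a).taut_mp₃ (hf n j hj a)
        (hle n i hi j hj hij (interp (f n) g a)) ?_
      grind [interp]
    | @box_neg i j a hij hi hj =>
      filter_upwards [hneg i hi j hj hij a] with n hn
      have hcongr := (hB n j hj).map (a := ∼(B n i (interp (f n) g a)))
        ((hf n i hi a).taut_mp (b := _ ⇒ interp (f n) g ∼□[i]a) (by grind [interp]))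
      exact (hf n i hi a).taut_mp₄ (hf n j hj ∼□[i]a) hcongr hn (by grind [interp])
  | hyp h => exact h.elim
  | mp _ _ ihab iha =>
    filter_upwards [ihab, iha] with n hab ha using hab.mp ha
  | @nec i a hi _ ih =>
    filter_upwards [ih] with n ha
    exact (hf n i hi a).taut_mp₂ ((hB n i hi).nec ha) fun _ h => h.2

end Derivability

/-! ### Removing the greatest or the least modality -/

section ReplaceBox

variable [DecidableEq I] {a b : ModalFormula I V} {i k : I}
  {r : ModalFormula I V → ModalFormula I V} {c : ModalFormula I V → Prop}

/-- The formula obtained from `a` by replacing each subformula `[k]b` that does not lie inside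
another one by `r b`. -/
def replaceBox (k : I) (r : ModalFormula I V → ModalFormula I V) :
    ModalFormula I V → ModalFormula I V :=
  interp (fun i a a' => if i = k then r a else □[i]a') var

theorem replaceBox_box_self : replaceBox k r □[k]a = r a :=
  if_pos rfl

theorem replaceBox_box_of_ne (hi : i ≠ k) :
    replaceBox k r □[i]a = □[i](replaceBox k r a) :=
  if_neg hi

theorem replaceBox_of_notMem (ha : k ∉ a.mods) : replaceBox k r a = a :=
  (interp_congr fun i hi => by
    simp only [show i ≠ k from fun h => ha (h ▸ hi), if_false]).trans (subst_var a)

open Classical in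
/-- `a` with each outermost subformula `[k]b` replaced by the truth value of `c b`. -/
noncomputable def decideBox (k : I) (c : ModalFormula I V → Prop) :
    ModalFormula I V → ModalFormula I V :=
  replaceBox k fun a => if c a then top else ∼top

open Classical in
/-- The conjunction of the formulas of `L` that satisfy `c`, with outermost `[k]b` decided
by `c`. -/
noncomputable def decideConj (k : I) (L : Finset (ModalFormula I V))
    (c : ModalFormula I V → Prop) : ModalFormula I V :=
  conj (({a ∈ L | c a} : Finset _).toList.map (decideBox k c))

theorem decideBox_imp :
    decideBox k c (a ⇒ b) = (decideBox k c a ⇒ decideBox k c b) :=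
  rfl

theorem decideBox_neg :
    decideBox k c ∼a = ∼(decideBox k c a) :=
  rfl

theorem decideBox_box_of_ne (hi : i ≠ k) :
    decideBox k c □[i]a = □[i](decideBox k c a) :=
  replaceBox_box_of_ne hi

theorem eval_decideBox_box_self {w : ModalFormula I V → Prop} :
    eval w (decideBox k c □[k]a) ↔ c a := by
  rw [decideBox, replaceBox_box_self]
  split_ifs with ha <;> simp [eval, ha]

end ReplaceBox

section Extremal

variable [LinearOrder I] {S T : Set I} {E : Set (ModalFormula I V)} {a b : ModalFormula I V}
  {h i j k : I} {L : Finset (ModalFormula I V)} {n : ℕ}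

open Provable

theorem Provable.of_insert_of_forall_lt (hk : ∀ i ∈ T, i < k) (ha : a.mods ⊆ T)
    (h : Provable (insert k T) ∅ a) : Provable T ∅ a := by
  rw [← replaceBox_of_notMem (r := fun _ => top) fun hka => (hk k (ha hka)).false]
  refine Filter.eventually_pure.1 (eventually_interp (l := pure ()) (E := fun _ => ∅)
    (f := fun _ i _ b => if i = k then top else □[i]b)
    (B := fun _ i b => if i = k then top else □[i]b)
    (fun _ _ _ _ => taut fun _ => ⟨id, id⟩) ?_ ?_ ?_ h : ∀ᶠ _ in pure (), _)
  · rintro - i (rfl | hi)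
    · simp only [if_true]
      exact ⟨⟨fun _ => taut fun _ => trivial, fun _ _ => taut fun _ _ _ => trivial⟩,
        fun _ => taut fun _ _ => trivial, fun _ => taut fun _ _ => trivial⟩
    · simp only [(hk i hi).ne, if_false]
      exact isGL_box hi
  · rintro - i hi j (rfl | hj) hij b
    · simp only [if_true]
      exact taut fun _ _ => trivial
    · obtain hi := hi.resolve_left (hij.trans (hk j hj)).ne
      simp only [(hk i hi).ne, (hk j hj).ne, if_false]
      exact Provable.box_le hij.le hi hj
  · rintro i hi j (rfl | hj) hij b <;> refine Filter.eventually_pure.2 ?_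
    · simp only [if_true]
      exact taut fun _ _ => trivial
    · obtain hi := hi.resolve_left (hij.trans (hk j hj)).ne
      simp only [(hk i hi).ne, (hk j hj).ne, if_false]
      exact Provable.box_neg hij hi hj

/-- Successive approximations to a predicate `c` such that `c a` means that `a`, read with
`[k]b` decided by `c b`, follows from `[h]` applied to those formulas of `L` that satisfy `c`. -/
def stage (T : Set I) (k h : I) (L : Finset (ModalFormula I V)) : ℕ → ModalFormula I V → Prop
  | 0, _ => True
  | n + 1, a => stage T k h L n a ∧
    Provable T ∅ (□[h](decideConj k L (stage T k h L n)) ⇒ decideBox k (stage T k h L n) a)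

theorem decideConj_imp {c : ModalFormula I V → Prop} (haL : a ∈ L) (ha : c a) :
    Provable S E (decideConj k L c ⇒ decideBox k c a) := by
  classical
  exact taut fun _ hc => eval_conj.1 hc _
    (List.mem_map_of_mem (Finset.mem_toList.2 (Finset.mem_filter.2 ⟨haL, ha⟩)))

theorem box_decideConj_imp {c : ModalFormula I V → Prop} (haL : a ∈ L) (hh : h ∈ S) (hi : i ∈ S)
    (hhi : h ≤ i) :
    Provable S E (□[h](decideConj k L c) ⇒ decideBox k c □[k]a ⇒ □[i](decideBox k c a)) := by
  by_cases ha : c a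
  · exact (imp_trans (box_le hhi hh hi) ((isNormal_box hi).map (decideConj_imp haL ha))).taut_mp
      fun _ h hX _ => h hX
  · exact taut fun _ _ h => (ha (eval_decideBox_box_self.1 h)).elim

theorem stage_of_forall (ha : ∀ n, Provable T ∅
      (□[h](decideConj k L (stage T k h L n)) ⇒ decideBox k (stage T k h L n) a)) :
    stage T k h L n a := by
  induction n with
  | zero => trivial
  | succ n ih => exact ⟨ih, ha n⟩

theorem stage_mp (hab : stage T k h L n (a ⇒ b)) (ha : stage T k h L n a) :
    stage T k h L n b := by
  induction n with
  | zero => trivial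
  | succ n ih =>
    exact ⟨ih hab.1 ha.1, hab.2.taut_mp₂ ha.2 fun _ hab ha h => hab h (ha h)⟩

theorem stage_box (ha : stage T k h L n a) : stage T k h L n □[k]a := by
  induction n with
  | zero => trivial
  | succ n ih => exact ⟨ih ha.1, taut fun _ _ => eval_decideBox_box_self.2 ha.1⟩

theorem stage_lob (ha : stage T k h L n (□[k]a ⇒ a)) : stage T k h L n a := by
  induction n with
  | zero => trivial
  | succ n ih =>
    have hn := ih ha.1
    exact ⟨hn, ha.2.taut_mp fun _ ha h => ha h (eval_decideBox_box_self.2 hn)⟩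

theorem exists_stage_succ (T : Set I) (k h : I) (L : Finset (ModalFormula I V)) :
    ∃ n, ∀ a ∈ L, stage T k h L n a → stage T k h L (n + 1) a := by
  classical
  let M : ℕ →o (Finset (ModalFormula I V))ᵒᵈ :=
    { toFun n := OrderDual.toDual {a ∈ L | stage T k h L n a}
      monotone' := monotone_nat_of_le_succ fun n =>
        Finset.monotone_filter_right L fun _ _ ha => ha.1 }
  obtain ⟨n, hn⟩ := WellFoundedGT.monotone_chain_condition M
  refine ⟨n, fun a haL ha => ?_⟩
  have haM : a ∈ OrderDual.ofDual (M n) := Finset.mem_filter.2 ⟨haL, ha⟩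
  rw [hn (n + 1) n.le_succ] at haM
  exact (Finset.mem_filter.1 haM).2

theorem not_decideBox_box_imp {c : ModalFormula I V → Prop} (hi : i ∈ S) :
    Provable S E (∼(decideBox k c □[k]a) ⇒ □[i]∼(decideBox k c □[k]a)) := by
  by_cases ha : c a
  · exact taut fun _ h => (h (eval_decideBox_box_self.2 ha)).elim
  · exact Provable.imp_intro (nec hi (taut fun _ h => ha (eval_decideBox_box_self.1 h)))

theorem isAxiom_decideBox {c : ModalFormula I V → Prop} (hk : k ∉ S) (ha : IsAxiom S a) :
    IsAxiom S (decideBox k c a) := by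
  have hne {i} (hi : i ∈ S) : i ≠ k := fun h => hk (h ▸ hi)
  cases ha with
  | taut ha => exact .taut fun _ => (eval_interp _).2 (ha _)
  | distr hi =>
    simp only [decideBox_imp, decideBox_box_of_ne (hne hi)]
    exact .distr hi
  | trans hi =>
    simp only [decideBox_imp, decideBox_box_of_ne (hne hi)]
    exact .trans hi
  | lob hi =>
    simp only [decideBox_imp, decideBox_box_of_ne (hne hi)]
    exact .lob hi
  | box_le hij hi hj =>
    simp only [decideBox_imp, decideBox_box_of_ne (hne hi), decideBox_box_of_ne (hne hj)]
    exact .box_le hij hi hj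
  | box_neg hij hi hj =>
    simp only [decideBox_imp, decideBox_neg, decideBox_box_of_ne (hne hi),
      decideBox_box_of_ne (hne hj)]
    exact .box_neg hij hi hj

theorem eventually_decideBox_of_isAxiom (hk : ∀ i ∈ T, k < i) (hh : h ∈ T)
    (hmin : ∀ i ∈ T, h ≤ i) (ha : IsAxiom (insert k T) a) :
    ∀ᶠ L in Filter.atTop, ∀ n, Provable T ∅
      (□[h](decideConj k L (stage T k h L n)) ⇒ decideBox k (stage T k h L n) a) := by
  by_cases haT : IsAxiom T a
  · filter_upwards with L n
    exact Provable.imp_intro (ax (isAxiom_decideBox (fun h => (hk k h).false) haT))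
  cases ha with
  | taut ha => exact (haT (.taut ha)).elim
  | distr hi =>
    obtain rfl := hi.resolve_right fun hi => haT (.distr hi)
    filter_upwards with L n
    exact taut fun _ _ hab ha => eval_decideBox_box_self.2
      (stage_mp (eval_decideBox_box_self.1 hab) (eval_decideBox_box_self.1 ha))
  | trans hi =>
    obtain rfl := hi.resolve_right fun hi => haT (.trans hi)
    filter_upwards with L n
    exact taut fun _ _ ha => eval_decideBox_box_self.2 (stage_box (eval_decideBox_box_self.1 ha))
  | lob hi =>
    obtain rfl := hi.resolve_right fun hi => haT (.lob hi)
    filter_upwards with L n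
    exact taut fun _ _ ha => eval_decideBox_box_self.2 (stage_lob (eval_decideBox_box_self.1 ha))
  | @box_le i j a hij hi hj =>
    have hjT : j ∈ T := hj.resolve_left (by grind)
    obtain rfl := hi.resolve_right fun hi => haT (.box_le hij hi hjT)
    filter_upwards [Filter.eventually_ge_atTop {a}] with L hL n
    rw [decideBox_imp, decideBox_box_of_ne (a := a) hij.ne']
    exact box_decideConj_imp (Finset.singleton_subset_iff.1 hL) hh hjT (hmin j hjT)
  | @box_neg i j a hij hi hj =>
    have hjT : j ∈ T := hj.resolve_left (by grind)
    obtain rfl := hi.resolve_right fun hi => haT (.box_neg hij hi hjT)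
    filter_upwards with L n
    rw [decideBox_imp, decideBox_box_of_ne (a := ∼□[i]a) hij.ne']
    exact Provable.imp_intro (not_decideBox_box_imp hjT)

theorem Provable.eventually_decideBox (hk : ∀ i ∈ T, k < i) (hh : h ∈ T) (hmin : ∀ i ∈ T, h ≤ i)
    (ha : Provable (insert k T) ∅ a) : ∀ᶠ L in Filter.atTop, ∀ n, Provable T ∅
      (□[h](decideConj k L (stage T k h L n)) ⇒ decideBox k (stage T k h L n) a) := by
  induction ha with
  | ax ha => exact eventually_decideBox_of_isAxiom hk hh hmin ha
  | hyp ha => exact ha.elim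
  | mp _ _ ihab iha =>
    filter_upwards [ihab, iha] with L hab ha n
    exact (hab n).taut_mp₂ (ha n) fun _ hab ha h => hab h (ha h)
  | @nec i a hi _ ih =>
    filter_upwards [ih] with L ha n
    obtain rfl | hi := hi
    · exact taut fun _ _ => eval_decideBox_box_self.2 (stage_of_forall ha)
    · rw [decideBox_box_of_ne (hk i hi).ne']
      exact (box_pos (hmin i hi) hh hi).imp_trans ((isNormal_box hi).map (ha n))

theorem Provable.of_insert_of_forall_gt (hk : ∀ i ∈ T, k < i) (hh : h ∈ T)
    (hmin : ∀ i ∈ T, h ≤ i) (ha : a.mods ⊆ T) (hp : Provable (insert k T) ∅ a) :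
    Provable T ∅ a := by
  classical
  obtain ⟨L, hL⟩ := (hp.eventually_decideBox hk hh hmin).exists
  obtain ⟨n, hn⟩ := exists_stage_succ T k h L
  have hX : Provable T ∅ (decideConj k L (stage T k h L n)) := by
    refine of_box_imp hh (imp_conj fun c hc => ?_)
    obtain ⟨b, hb, rfl⟩ := List.mem_map.1 hc
    obtain ⟨hbL, hb⟩ := Finset.mem_filter.1 (Finset.mem_toList.1 hb)
    exact (hn b hbL hb).2
  have hreplace : decideBox k (stage T k h L n) a = a :=
    replaceBox_of_notMem fun hka => (hk k (ha hka)).false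
  exact hreplace ▸ (hL n).mp (nec hh hX)

end Extremal

/-! ### Removing a modality with a predecessor -/

/-- The weakening of `B` that also holds of `a` whenever `δ` is true and `B (δ → a)` holds;
in particular it holds of `δ` if `δ` is true. -/
def persist (δ : ModalFormula I V) (B : ModalFormula I V → ModalFormula I V)
    (a : ModalFormula I V) : ModalFormula I V :=
  ∼(B a) ⇒ δ ⋏ B (δ ⇒ a)

@[grind =]
theorem eval_persist {w : ModalFormula I V → Prop} {δ a : ModalFormula I V}
    {B : ModalFormula I V → ModalFormula I V} :
    eval w (persist δ B a) ↔ eval w (B a) ∨ eval w δ ∧ eval w (B (δ ⇒ a)) := by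
  grind [persist]

/-- The box `[j]`, weakened so that each formula of `D` implies its own box. -/
def persistAll (j : I) (D : List (ModalFormula I V)) : ModalFormula I V → ModalFormula I V :=
  D.foldr persist (box j)

/-- The variable that stands for the translation of `[i]a`. -/
def boxVar (i : I) (a : ModalFormula I V) : ModalFormula I (V ⊕ I × ModalFormula I V) :=
  var (Sum.inr (i, a))

/-- The translation of `persistAll j D` applied to `a`, where `D` consists of the formulas
`¬[j]x` for `x` in the list. -/
def flatPersist (j : I) : List (ModalFormula I V) → ModalFormula I V →
    ModalFormula I (V ⊕ I × ModalFormula I V)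
  | [], a => boxVar j a
  | x :: l, a => ∼(flatPersist j l a) ⇒ ∼(boxVar j x) ⋏ flatPersist j l (∼□[j]x ⇒ a)

theorem mods_flatPersist {j : I} (l : List (ModalFormula I V)) (a : ModalFormula I V) :
    (flatPersist j l a).mods = ∅ := by
  induction l generalizing a with
  | nil => rfl
  | cons x l ih => simp only [flatPersist, mods, boxVar, ih, Set.union_self]

section Flatten

variable [DecidableEq I] {a : ModalFormula I V} {i j k : I} {l : List (ModalFormula I V)}

/-- The box-free translation that reads `[k]` as `[j]` weakened by `persistAll` and every other
`[i]a` as a variable, whose meaning is given by `fixedPointEq`. -/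
def flatten (j k : I) (l : List (ModalFormula I V)) :
    ModalFormula I V → ModalFormula I (V ⊕ I × ModalFormula I V) :=
  interp (fun i a _ => if i = k then flatPersist j l a else boxVar i a) fun p => var (Sum.inl p)

/-- The equations `boxVar i a ↔ [i] (flatten a)` for `i` in `T`. -/
def flattenEqs (T : Set I) (j k : I) (l : List (ModalFormula I V)) :
    Set (ModalFormula I (V ⊕ I × ModalFormula I V)) :=
  fixedPointEq Prod.fst (fun x => flatten j k l x.2) '' {x | x.1 ∈ T}

theorem flatten_box_of_ne (hi : i ≠ k) :
    flatten j k l □[i]a = boxVar i a :=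
  if_neg hi

theorem mods_flatten (l : List (ModalFormula I V)) (a : ModalFormula I V) :
    (flatten j k l a).mods = ∅ := by
  unfold flatten
  induction a with
  | var | top => rfl
  | neg _ ih => exact ih
  | and _ _ iha ihb | imp _ _ iha ihb => simp only [interp, mods, iha, ihb, Set.union_self]
  | box i a _ =>
    rw [interp]
    split_ifs
    · exact mods_flatPersist l a
    · rfl

/-- The operator that interprets `[i]` under `flatten j k l`: for `i = k`, the box `[j]` weakened
so that each `¬[j]x` with `x` in `l` persists. -/
def flatBox (j k : I) (l : List (ModalFormula I V)) (i : I) :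
    ModalFormula I (V ⊕ I × ModalFormula I V) → ModalFormula I (V ⊕ I × ModalFormula I V) :=
  if i = k then persistAll j (l.map fun x => ∼(boxVar j x)) else box i

theorem flatBox_self (j k : I) (l : List (ModalFormula I V)) :
    flatBox j k l k = persistAll j (l.map fun x => ∼(boxVar j x)) :=
  if_pos rfl

theorem flatBox_of_ne (hi : i ≠ k) : flatBox j k l i = box i :=
  if_neg hi

end Flatten

section Successor

variable [LinearOrder I] {S T : Set I} {E : Set (ModalFormula I V)} {a b c : ModalFormula I V}
  {i i' j k : I}

open Provable

/-- An operator that, relative to the modalities in `S`, satisfies the axioms for a modality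
`[j']` with `j'` immediately above `j`, except the monotonicity axiom `⟨j⟩a → [j']⟨j⟩a`. -/
structure IsSuccBox (S : Set I) (E : Set (ModalFormula I V)) (j : I)
    (B : ModalFormula I V → ModalFormula I V) : Prop extends IsGL S E B where
  of_box (a : ModalFormula I V) : Provable S E (□[j]a ⇒ B a)
  box_of {i : I} (hi : i ∈ S) (hji : j < i) (a : ModalFormula I V) : Provable S E (B a ⇒ □[i]a)
  box_neg {i : I} (hi : i ∈ S) (hji : j < i) (a : ModalFormula I V) :
    Provable S E (∼(B a) ⇒ □[i]∼(B a))

theorem isSuccBox_box (hj : j ∈ S) : IsSuccBox S E j (box j) where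
  toIsGL := isGL_box hj
  of_box _ := taut fun _ => id
  box_of hi hji _ := Provable.box_le hji.le hj hi
  box_neg hi hji _ := Provable.box_neg hji hj hi

theorem imp_persist (δ : ModalFormula I V) (B : ModalFormula I V → ModalFormula I V)
    (a : ModalFormula I V) : Provable S E (B a ⇒ persist δ B a) :=
  taut fun _ h h' => (h' h).elim

variable {δ : ModalFormula I V} {B : ModalFormula I V → ModalFormula I V}

theorem IsNormal.imp_persist_self (hB : IsNormal S E B) : Provable S E (δ ⇒ persist δ B δ) :=
  (hB.nec (taut (a := δ ⇒ δ) fun _ => id)).taut_mp fun _ h hδ _ => ⟨hδ, h⟩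

theorem IsNormal.persist (hB : IsNormal S E B) : IsNormal S E (persist δ B) where
  nec h := mp (imp_persist _ _ _) (hB.nec h)
  distr a b := by
    have hrelative : Provable S E (B (δ ⇒ a ⇒ b) ⇒ B (δ ⇒ a) ⇒ B (δ ⇒ b)) :=
      hB.map₂_taut fun _ hab ha hδ => hab hδ (ha hδ)
    have hab : Provable S E (B (a ⇒ b) ⇒ B (δ ⇒ a ⇒ b)) := hB.map_taut fun _ hab _ => hab
    have ha : Provable S E (B a ⇒ B (δ ⇒ a)) := hB.map_taut fun _ ha _ => ha
    exact (hB.distr a b).taut_mp₄ hrelative hab ha (by grind)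

theorem IsGL.persist (hB : IsGL S E B) : IsGL S E (persist δ B) where
  toIsNormal := hB.toIsNormal.persist
  trans a := by
    have h : Provable S E (B a ⇒ B (ModalFormula.persist δ B a)) :=
      (hB.trans a).imp_trans (hB.map (imp_persist δ B a))
    have hδ : Provable S E (B (δ ⇒ a) ⇒ B (δ ⇒ ModalFormula.persist δ B a)) :=
      (hB.trans (δ ⇒ a)).imp_trans (hB.map_taut fun _ h hδ _ => ⟨hδ, h⟩)
    exact h.taut_mp₂ hδ (by grind)
  lob a := by
    have h : Provable S E (B (ModalFormula.persist δ B a ⇒ a) ⇒ B a) :=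
      (hB.map_taut (b := B a ⇒ a) (by grind)).imp_trans (hB.lob a)
    have hδ : Provable S E (B (δ ⇒ ModalFormula.persist δ B a ⇒ a) ⇒ B (δ ⇒ a)) :=
      (hB.map_taut (b := B (δ ⇒ a) ⇒ δ ⇒ a) (by grind)).imp_trans (hB.lob (δ ⇒ a))
    exact h.taut_mp₂ hδ (by grind)

theorem IsSuccBox.persist (hB : IsSuccBox S E j B)
    (hδ : ∀ i ∈ S, j < i → Provable S E (δ ⇒ □[i]δ))
    (hδ' : ∀ i ∈ S, j < i → Provable S E (∼δ ⇒ □[i]∼δ)) :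
    IsSuccBox S E j (persist δ B) where
  toIsGL := hB.toIsGL.persist
  of_box a := (hB.of_box a).imp_trans (imp_persist δ B a)
  box_of {i} hi hji a := by
    have hmp : Provable S E (□[i](δ ⇒ a) ⇒ □[i]δ ⇒ □[i]a) := (isNormal_box hi).distr δ a
    exact (hB.box_of hi hji a).taut_mp₄ (hB.box_of hi hji (δ ⇒ a)) (hδ i hi hji) hmp
      (by grind)
  box_neg {i} hi hji a := by
    have hbox : Provable S E (∼(B a) ⇒ ∼(B (δ ⇒ a)) ⇒ □[i]∼(ModalFormula.persist δ B a)) :=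
      (hB.box_neg hi hji a).taut_mp₃ (hB.box_neg hi hji (δ ⇒ a))
        ((isNormal_box hi).map₂_taut (a := ∼(B a)) (b := ∼(B (δ ⇒ a)))
          (c := ∼(ModalFormula.persist δ B a)) (by grind)) (by grind)
    have hneg : Provable S E (∼(B a) ⇒ ∼δ ⇒ □[i]∼(ModalFormula.persist δ B a)) :=
      (hB.box_neg hi hji a).taut_mp₃ (hδ' i hi hji)
        ((isNormal_box hi).map₂_taut (a := ∼(B a)) (b := ∼δ)
          (c := ∼(ModalFormula.persist δ B a)) (by grind)) (by grind)
    exact hbox.taut_mp₂ hneg (by grind)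

theorem isSuccBox_persistAll (hj : j ∈ S) {D : List (ModalFormula I V)}
    (hD : ∀ δ ∈ D, ∀ i ∈ S, j < i → Provable S E (δ ⇒ □[i]δ))
    (hD' : ∀ δ ∈ D, ∀ i ∈ S, j < i → Provable S E (∼δ ⇒ □[i]∼δ)) :
    IsSuccBox S E j (persistAll j D) := by
  induction D with
  | nil => exact isSuccBox_box hj
  | cons δ D ih =>
    exact (ih (fun ε hε => hD ε (List.mem_cons_of_mem δ hε))
      (fun ε hε => hD' ε (List.mem_cons_of_mem δ hε))).persist
      (hD δ List.mem_cons_self) (hD' δ List.mem_cons_self)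

theorem isNormal_persistAll (hj : j ∈ S) (D : List (ModalFormula I V)) :
    IsNormal S E (persistAll j D) := by
  induction D with
  | nil => exact isNormal_box hj
  | cons δ D ih => exact ih.persist

theorem imp_persistAll_self (hj : j ∈ S) {D : List (ModalFormula I V)} (hδ : δ ∈ D) :
    Provable S E (δ ⇒ persistAll j D δ) := by
  induction D with
  | nil => exact absurd hδ List.not_mem_nil
  | cons ε D ih =>
    obtain rfl | hδ := List.mem_cons.1 hδ
    · exact (isNormal_persistAll hj D).imp_persist_self
    · exact (ih hδ).imp_trans (imp_persist _ _ _)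

theorem boxVar_iff {l : List (ModalFormula I V)} {i : I} (hi : i ∈ T) (a : ModalFormula I V) :
    Provable T (flattenEqs T j k l) (boxVar i a ⇔ □[i](flatten j k l a)) :=
  hyp ⟨(i, a), hi, rfl⟩

theorem boxVar_imp_box (hj : j ∈ T) (hi : i ∈ T) (hji : j ≤ i) {l : List (ModalFormula I V)}
    (x : ModalFormula I V) :
    Provable T (flattenEqs T j k l) (boxVar j x ⇒ □[i](boxVar j x)) := by
  have hx : Provable T (flattenEqs T j k l) (boxVar j x ⇔ □[j](flatten j k l x)) :=
    boxVar_iff hj x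
  have hbox : Provable T (flattenEqs T j k l) (□[j](flatten j k l x) ⇒ □[i]□[j](flatten j k l x)) :=
    box_pos hji hj hi
  exact hx.taut_mp₃ hbox ((isNormal_box hi).congr hx) (by grind)

theorem neg_boxVar_imp_box (hj : j ∈ T) (hi : i ∈ T) (hji : j < i) {l : List (ModalFormula I V)}
    (x : ModalFormula I V) :
    Provable T (flattenEqs T j k l) (∼(boxVar j x) ⇒ □[i]∼(boxVar j x)) := by
  have hx : Provable T (flattenEqs T j k l) (boxVar j x ⇔ □[j](flatten j k l x)) :=
    boxVar_iff hj x
  have hbox : Provable T (flattenEqs T j k l)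
      (∼□[j](flatten j k l x) ⇒ □[i]∼□[j](flatten j k l x)) :=
    Provable.box_neg hji hj hi
  have hmap : Provable T (flattenEqs T j k l)
      (□[i]∼□[j](flatten j k l x) ⇒ □[i]∼(boxVar j x)) :=
    (isNormal_box hi).map (hx.taut_mp (by grind))
  exact hx.taut_mp₃ hbox hmap (by grind)

theorem flatPersist_iff (hj : j ∈ T) (hjk : j ≠ k) (l l' : List (ModalFormula I V))
    (a : ModalFormula I V) : Provable T (flattenEqs T j k l')
      (flatPersist j l a ⇔ persistAll j (l.map fun x => ∼(boxVar j x)) (flatten j k l' a)) := by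
  induction l generalizing a with
  | nil => exact boxVar_iff hj a
  | cons x l ih =>
    have hx := ih (∼□[j]x ⇒ a)
    rw [show flatten j k l' (∼□[j]x ⇒ a) = (∼(boxVar j x) ⇒ flatten j k l' a) by
      rw [← flatten_box_of_ne hjk]; rfl] at hx
    change Provable T _ (_ ⇔ persist _ (persistAll j (l.map fun x => ∼(boxVar j x))) _)
    exact (ih a).taut_mp₂ hx (by grind [flatPersist])

theorem flatten_iff_embed (hk : k ∉ T) {l : List (ModalFormula I V)} (ha : a.mods ⊆ T) :
    Provable T (flattenEqs T j k l) (flatten j k l a ⇔ embed a) := by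
  induction a with
  | var | top => exact taut fun _ => ⟨id, id⟩
  | neg a ih =>
    change Provable T _ (∼(flatten j k l a) ⇔ ∼(embed a))
    exact (ih ha).taut_mp (by grind)
  | and a b iha ihb =>
    change Provable T _ (flatten j k l a ⋏ flatten j k l b ⇔ embed a ⋏ embed b)
    rw [mods, Set.union_subset_iff] at ha
    exact (iha ha.1).taut_mp₂ (ihb ha.2) (by grind)
  | imp a b iha ihb =>
    change Provable T _ ((flatten j k l a ⇒ flatten j k l b) ⇔ (embed a ⇒ embed b))
    rw [mods, Set.union_subset_iff] at ha
    exact (iha ha.1).taut_mp₂ (ihb ha.2) (by grind)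
  | box i a ih =>
    change Provable T _ (flatten j k l □[i]a ⇔ □[i](embed a))
    rw [mods, Set.insert_subset_iff] at ha
    rw [flatten_box_of_ne (ne_of_mem_of_not_mem ha.1 hk)]
    exact (boxVar_iff ha.1 a).taut_mp₂ ((isNormal_box ha.1).congr (ih ha.2)) (by grind)

theorem flatten_box_iff (hj : j ∈ T) (hjk : j ≠ k) (hi : i ∈ insert k T)
    (l : List (ModalFormula I V)) (a : ModalFormula I V) :
    Provable T (flattenEqs T j k l)
      (flatten j k l □[i]a ⇔ flatBox j k l i (flatten j k l a)) := by
  obtain rfl | hik := eq_or_ne i k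
  · rw [flatBox_self, show flatten j i l □[i]a = flatPersist j l a from if_pos rfl]
    exact flatPersist_iff hj hjk l l a
  · rw [flatBox_of_ne hik, flatten_box_of_ne hik]
    exact boxVar_iff (hi.resolve_left hik) a

theorem isSuccBox_flatBox_self (hj : j ∈ T) (l : List (ModalFormula I V)) :
    IsSuccBox T (flattenEqs T j k l) j (flatBox j k l k) := by
  rw [flatBox_self]
  refine isSuccBox_persistAll hj ?_ ?_ <;> rintro _ hδ i hi hji <;>
    obtain ⟨x, -, rfl⟩ := List.mem_map.1 hδ
  · exact neg_boxVar_imp_box hj hi hji x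
  · have hbox : Provable T (flattenEqs T j k l) (□[i](boxVar j x) ⇒ □[i]∼∼(boxVar j x)) :=
      (isNormal_box hi).map_taut fun _ h h' => h' h
    exact (boxVar_imp_box hj hi hji.le x).taut_mp₂ hbox (by grind)

theorem isGL_flatBox (hj : j ∈ T) (hi : i ∈ insert k T) (l : List (ModalFormula I V)) :
    IsGL T (flattenEqs T j k l) (flatBox j k l i) := by
  obtain rfl | hik := eq_or_ne i k
  · exact (isSuccBox_flatBox_self hj l).toIsGL
  · rw [flatBox_of_ne hik]
    exact isGL_box (hi.resolve_left hik)

theorem flatBox_le (hj : j ∈ T) (hjk : j < k) (hpred : ∀ i ∈ T, i < k → i ≤ j)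
    (hi : i ∈ insert k T) (hi' : i' ∈ insert k T) (hii' : i < i') (l : List (ModalFormula I V))
    (b : ModalFormula I (V ⊕ I × ModalFormula I V)) :
    Provable T (flattenEqs T j k l) (flatBox j k l i b ⇒ flatBox j k l i' b) := by
  have hsucc := isSuccBox_flatBox_self (k := k) hj l
  obtain rfl | hik := eq_or_ne i k
  · rw [flatBox_of_ne hii'.ne']
    exact hsucc.box_of (hi'.resolve_left hii'.ne') (hjk.trans hii') b
  have hiT := hi.resolve_left hik
  rw [flatBox_of_ne hik]
  obtain rfl | hik' := eq_or_ne i' k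
  · exact imp_trans (Provable.box_le (hpred i hiT hii') hiT hj) (hsucc.of_box b)
  · rw [flatBox_of_ne hik']
    exact Provable.box_le hii'.le hiT (hi'.resolve_left hik')

theorem flatBox_neg_of_mem (hj : j ∈ T) {l : List (ModalFormula I V)} (ha : a ∈ l) :
    Provable T (flattenEqs T j k l) (∼□[j](flatten j k l a) ⇒
      flatBox j k l k ∼□[j](flatten j k l a)) := by
  have hx := boxVar_iff (j := j) (k := k) (l := l) hj a
  have hself : Provable T (flattenEqs T j k l)
      (∼(boxVar j a) ⇒ flatBox j k l k ∼(boxVar j a)) := by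
    rw [flatBox_self]
    exact imp_persistAll_self hj (List.mem_map_of_mem ha)
  have hbox := (isSuccBox_flatBox_self (k := k) hj l).map
    (hx.taut_mp (b := ∼(boxVar j a) ⇒ ∼□[j](flatten j k l a)) (by grind))
  exact hx.taut_mp₃ hself hbox (by grind)

theorem eventually_flatBox_neg (hj : j ∈ T) (hjk : j < k) (hpred : ∀ i ∈ T, i < k → i ≤ j)
    (hi : i ∈ insert k T) (hi' : i' ∈ insert k T) (hii' : i < i') (a : ModalFormula I V) :
    ∀ᶠ L : Finset (ModalFormula I V) in Filter.atTop,
      Provable T (flattenEqs T j k L.toList) (∼(flatBox j k L.toList i (flatten j k L.toList a)) ⇒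
        flatBox j k L.toList i' ∼(flatBox j k L.toList i (flatten j k L.toList a))) := by
  filter_upwards [Filter.eventually_ge_atTop {a}] with L hL
  have haL : a ∈ L.toList := Finset.mem_toList.2 (Finset.singleton_subset_iff.1 hL)
  have hsucc := isSuccBox_flatBox_self (k := k) hj L.toList
  obtain rfl | hik := eq_or_ne i k
  · rw [flatBox_of_ne hii'.ne']
    exact hsucc.box_neg (hi'.resolve_left hii'.ne') (hjk.trans hii') _
  have hiT := hi.resolve_left hik
  rw [flatBox_of_ne hik]
  obtain rfl | hik' := eq_or_ne i' k
  · obtain rfl | hij := (hpred i hiT hii').eq_or_lt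
    · exact flatBox_neg_of_mem hj haL
    · exact imp_trans (Provable.box_neg hij hiT hj) (hsucc.of_box _)
  · rw [flatBox_of_ne hik']
    exact Provable.box_neg hii' hiT (hi'.resolve_left hik')

theorem Provable.of_insert_of_pred (hk : k ∉ T) (hj : j ∈ T) (hjk : j < k)
    (hpred : ∀ i ∈ T, i < k → i ≤ j) (ha : a.mods ⊆ T) (h : Provable (insert k T) ∅ a) :
    Provable T ∅ a := by
  have hflat : ∀ᶠ L : Finset (ModalFormula I V) in Filter.atTop,
      Provable T (flattenEqs T j k L.toList) (flatten j k L.toList a) :=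
    eventually_interp (B := fun L => flatBox j k L.toList)
      (fun L i hi a => flatten_box_iff hj hjk.ne hi L.toList a)
      (fun L i hi => isGL_flatBox hj hi L.toList)
      (fun L i hi i' hi' hii' => flatBox_le hj hjk hpred hi hi' hii' L.toList)
      (fun i hi i' hi' hii' => eventually_flatBox_neg hj hjk hpred hi hi' hii') h
  obtain ⟨L, hL⟩ := hflat.exists
  have hembed : Provable T (flattenEqs T j k L.toList) (embed a) :=
    hL.taut_mp₂ (flatten_iff_embed hk ha) (by grind)
  exact provable_of_fixedPointEq (ι := Prod.fst) (C := fun x => flatten j k L.toList x.2)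
    (fun _ hx => hx) (fun x _ => mods_flatten L.toList x.2) hembed

theorem Provable.of_insert (hT : T.Finite) (ha : a.mods ⊆ T)
    (h : Provable (insert k T) ∅ a) : Provable T ∅ a := by
  by_cases hk : k ∈ T
  · rwa [Set.insert_eq_of_mem hk] at h
  obtain hbelow | hbelow := (T ∩ Set.Iio k).eq_empty_or_nonempty
  · have hgt i (hi : i ∈ T) : k < i := by
      refine lt_of_le_of_ne (not_lt.1 fun hik => ?_) (ne_of_mem_of_not_mem hi hk).symm
      exact Set.eq_empty_iff_forall_notMem.1 hbelow i ⟨hi, hik⟩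
    obtain rfl | hne := T.eq_empty_or_nonempty
    · exact h.of_insert_of_forall_lt (fun _ hi => hi.elim) ha
    · obtain ⟨m, hm, hmin⟩ := Set.exists_min_image T id hT hne
      exact h.of_insert_of_forall_gt hgt hm hmin ha
  · obtain ⟨j, ⟨hj, hjk⟩, hmax⟩ := Set.exists_max_image _ id (hT.inter_of_left _) hbelow
    exact h.of_insert_of_pred hk hj hjk (fun i hi hik => hmax i ⟨hi, hik⟩) ha

theorem Provable.restrict_mods (h : Provable S ∅ a) : Provable a.mods ∅ a := by
  obtain ⟨S₀, -, E₀, hE₀, hfin, -, h⟩ := h.exists_finite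
  rw [Set.subset_empty_iff.1 hE₀] at h
  have hunion : Provable (S₀ ∪ a.mods) ∅ a := h.mono Set.subset_union_left subset_rfl
  clear h
  induction S₀, hfin using Set.Finite.induction_on with
  | empty => rwa [Set.empty_union] at hunion
  | @insert k F _ hF ih =>
    rw [Set.insert_union] at hunion
    exact ih (hunion.of_insert (hF.union a.finite_mods) Set.subset_union_right)

end Successor

/-! ### Translation from and to `GLPFormula` -/

section Transfer

/-- The identification of `GLPFormula` with the formulas whose modalities are ordinals. -/
def ofGLP : GLPFormula → ModalFormula Ordinal.{0} ℕ
  | .var p => var p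
  | .top => top
  | .neg a => ∼(ofGLP a)
  | .and a b => ofGLP a ⋏ ofGLP b
  | .imp a b => ofGLP a ⇒ ofGLP b
  | .box i a => □[i](ofGLP a)

theorem mods_ofGLP (a : GLPFormula) : (ofGLP a).mods = a.mods := by
  induction a with
  | var | top => rfl
  | neg _ ih => exact ih
  | and _ _ iha ihb | imp _ _ iha ihb => exact congrArg₂ _ iha ihb
  | box i _ ih => exact congrArg (insert i) ih

theorem provable_ofGLP {S : Set Ordinal.{0}} {a : GLPFormula} (h : GLPProof S a) :
    Provable S ∅ (ofGLP a) := by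
  classical
  induction h with
  | taut _ h =>
    refine .taut fun w => ?_
    have := h (fun b => decide (eval w (ofGLP b))) (by simp [ofGLP, eval])
      (by simp [ofGLP, eval]) (by simp [ofGLP, eval])
      (by simp [ofGLP, eval, imp_iff_not_or])
    exact of_decide_eq_true this
  | distr hi => exact .ax (.distr hi)
  | trans hi => exact .ax (.trans hi)
  | lob hi => exact .ax (.lob hi)
  | @negIntro i j a hij hi hj =>
    exact (Provable.box_le (a := ∼(ofGLP a)) hij.le hi hj).taut_mp fun _ h hj hi => hj (h hi)
  | mono hij hi hj => exact .ax (.box_neg hij hi hj)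
  | mp _ _ ihab iha => exact .mp ihab iha
  | nec hi _ ih => exact .nec hi ih

variable {S T : Set Ordinal.{0}} {s : Ordinal.{0} → Ordinal.{0}} {i : Ordinal.{0}}
  {a : ModalFormula Ordinal.{0} ℕ}

open Classical in
/-- The inverse of `ofGLP`, followed by relabelling along `s`. Boxes with index outside `S` become
`⊤`, so that all indices of the result lie in the image of `S`. -/
noncomputable def toGLP (S : Set Ordinal.{0}) (s : Ordinal.{0} → Ordinal.{0}) :
    ModalFormula Ordinal.{0} ℕ → GLPFormula
  | var p => .var p
  | top => .top
  | neg a => (toGLP S s a).neg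
  | and a b => (toGLP S s a).and (toGLP S s b)
  | imp a b => (toGLP S s a).imp (toGLP S s b)
  | box i a => if i ∈ S then (toGLP S s a).box (s i) else .top

theorem toGLP_box (hi : i ∈ S) : toGLP S s □[i]a = (toGLP S s a).box (s i) :=
  if_pos hi

theorem mods_toGLP_subset (hT : Set.MapsTo s S T) (a : ModalFormula Ordinal.{0} ℕ) :
    (toGLP S s a).mods ⊆ T := by
  induction a with
  | var | top => exact Set.empty_subset T
  | neg _ ih => exact ih
  | and _ _ iha ihb | imp _ _ iha ihb => exact Set.union_subset iha ihb
  | box i _ ih =>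
    rw [toGLP]
    split_ifs with hi
    · exact Set.insert_subset (hT hi) ih
    · exact Set.empty_subset T

theorem toGLP_ofGLP {a : GLPFormula} (ha : a.mods ⊆ S) : toGLP S s (ofGLP a) = relabel s a := by
  induction a with
  | var | top => rfl
  | neg _ ih => exact congrArg GLPFormula.neg (ih ha)
  | and _ _ iha ihb | imp _ _ iha ihb =>
    have ha := Set.union_subset_iff.1 ha
    simp only [ofGLP, toGLP, relabel, iha ha.1, ihb ha.2]
  | box i _ ih =>
    have ha := Set.insert_subset_iff.1 ha
    rw [ofGLP, toGLP_box ha.1, ih ha.2, relabel]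

theorem isTautology_toGLP (ha : ∀ w, eval w a) : IsTautology (toGLP S s a) := by
  intro v htop hneg hand himp
  have heval (b : ModalFormula Ordinal.{0} ℕ) :
      eval (fun b => v (toGLP S s b) = true) b ↔ v (toGLP S s b) = true := by
    induction b with
    | var | box => rfl
    | top => simp [eval, toGLP, htop]
    | neg _ ih => simp [eval, toGLP, hneg, ih]
    | and _ _ iha ihb => simp [eval, toGLP, hand, iha, ihb]
    | imp _ _ iha ihb => simp [eval, toGLP, himp, iha, ihb, imp_iff_not_or]
  exact (heval a).1 (ha _)

theorem glpProof_toGLP (hs : StrictMonoOn s S) (hT : Set.MapsTo s S T) (h : Provable S ∅ a) :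
    GLPProof T (toGLP S s a) := by
  have hmods := mods_toGLP_subset hT
  induction h with
  | ax h =>
    cases h with
    | taut h => exact .taut (hmods _) (isTautology_toGLP h)
    | distr hi =>
      simp only [toGLP, if_pos hi]
      exact .distr (hT hi) (hmods _) (hmods _)
    | trans hi =>
      simp only [toGLP, if_pos hi]
      exact .trans (hT hi) (hmods _)
    | lob hi =>
      simp only [toGLP, if_pos hi]
      exact .lob (hT hi) (hmods _)
    | box_le hij hi hj =>
      simp only [toGLP, if_pos hi, if_pos hj]
      exact .box_le (hs hi hj hij) (hT hi) (hT hj) (hmods _)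
    | box_neg hij hi hj =>
      simp only [toGLP, if_pos hi, if_pos hj]
      exact .box_neg (hs hi hj hij) (hT hi) (hT hj) (hmods _)
  | hyp h => exact h.elim
  | mp _ _ ihab iha => exact .mp ihab iha
  | nec hi _ ih =>
    rw [toGLP_box hi]
    exact .nec (hT hi) ih

end Transfer

end ModalFormula

theorem demotion_general {S T : Set Ordinal.{0}} {φ : GLPFormula} {s : Ordinal.{0} → Ordinal.{0}}
    (hs : StrictMonoOn s φ.mods) (hT : Set.MapsTo s φ.mods T) (h : GLPProof S φ) :
    GLPProof T (relabel s φ) := by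
  have hrestrict : ModalFormula.Provable φ.mods ∅ (ModalFormula.ofGLP φ) :=
    ModalFormula.mods_ofGLP φ ▸ (ModalFormula.provable_ofGLP h).restrict_mods
  rw [← ModalFormula.toGLP_ofGLP subset_rfl]
  exact ModalFormula.glpProof_toGLP hs hT hrestrict

/-- Demotion: if `s` is the strictly increasing enumeration of the modality indices
of `φ ∧ ψ` and `⊢_GLP φ → ψ`, then `⊢_{GLP_ω} φ̄ → ψ̄`. -/
theorem demotion (φ ψ : GLPFormula) (s : Ordinal → ℕ)
    (hmono : ∀ a ∈ (φ.and ψ).mods, ∀ b ∈ (φ.and ψ).mods, a < b → s a < s b)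
    (henum : s '' (φ.and ψ).mods = Set.Iio ((φ.and ψ).mods.ncard))
    (h : GLPProves (φ.imp ψ)) :
    GLPomegaProves ((relabel (fun ξ => ((s ξ : ℕ) : Ordinal)) φ).imp
      (relabel (fun ξ => ((s ξ : ℕ) : Ordinal)) ψ)) := by
  exact demotion_general (φ := φ.imp ψ) (fun a ha b hb hab => Nat.cast_lt.2 (hmono a ha b hb hab))
    (fun _ _ => Ordinal.natCast_lt_omega0 _) h
end

section
/- (Promotion) Let φ and ψ be GLP formulas, let s : mod(φ∧ψ) → ω be the strictly increasing enumeration of the finite set of ordinals occurring as modality indices in φ∧ψ, and let φ̄ and ψ̄ be obtained from φ and ψ by replacing every modality index ξ by s(ξ). If ⊢_{GLP_ω} φ̄ → ψ̄, then ⊢_GLP φ → ψ. -/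
/-!
Relabelling the modalities along a strictly increasing map of ordinals turns GLP proofs into GLP
proofs. It therefore suffices to extend the inverse of `s`, defined on the initial segment
`s(mod(φ ∧ ψ))`, to a strictly increasing map on all ordinals: applied to the whole proof of
`φ̄ → ψ̄`, whose inner formulas may use indices outside that segment, it gives a proof of `φ → ψ`.
-/

namespace GLPFormula

theorem finite_mods (φ : GLPFormula) : φ.mods.Finite := by
  induction φ <;> simp [mods, *]

theorem mods_relabel (t : Ordinal → Ordinal) (φ : GLPFormula) :
    (relabel t φ).mods = t '' φ.mods := by
  induction φ <;> simp [mods, relabel, Set.image_union, Set.image_insert_eq, *]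

theorem relabel_relabel_of_leftInvOn {s t : Ordinal → Ordinal} {φ : GLPFormula}
    (h : Set.LeftInvOn t s φ.mods) : relabel t (relabel s φ) = φ := by
  induction φ with
  | var | top => rfl
  | neg φ ih => rw [relabel, relabel, ih h]
  | and φ ψ ihφ ihψ | imp φ ψ ihφ ihψ =>
    rw [relabel, relabel, ihφ (h.mono Set.subset_union_left), ihψ (h.mono Set.subset_union_right)]
  | box ξ φ ih =>
    rw [relabel, relabel, ih (h.mono (Set.subset_insert ξ φ.mods)), h (Set.mem_insert ξ φ.mods)]

end GLPFormula

theorem IsTautology.relabel (t : Ordinal → Ordinal) {φ : GLPFormula} (hφ : IsTautology φ) :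
    IsTautology (relabel t φ) := fun v htop hneg hand himp =>
  hφ (fun χ => v (_root_.relabel t χ)) htop (fun _ => hneg _) (fun _ _ => hand _ _)
    (fun _ _ => himp _ _)

theorem GLPProof.relabel {S T : Set Ordinal} {t : Ordinal → Ordinal} (hmono : StrictMonoOn t S)
    (hmaps : Set.MapsTo t S T) {φ : GLPFormula} (h : GLPProof S φ) :
    GLPProof T (relabel t φ) := by
  have mods_subset {χ : GLPFormula} (hχ : χ.mods ⊆ S) : (_root_.relabel t χ).mods ⊆ T := by
    rw [GLPFormula.mods_relabel]
    exact (hmaps.mono_left hχ).image_subset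
  induction h with
  | taut hφ htaut => exact taut (mods_subset hφ) (htaut.relabel t)
  | distr hξ hφ hψ => exact distr (hmaps hξ) (mods_subset hφ) (mods_subset hψ)
  | trans hξ hφ => exact trans (hmaps hξ) (mods_subset hφ)
  | lob hξ hφ => exact lob (hmaps hξ) (mods_subset hφ)
  | negIntro hlt hξ hζ hφ =>
    exact negIntro (hmono hξ hζ hlt) (hmaps hξ) (hmaps hζ) (mods_subset hφ)
  | mono hlt hξ hζ hφ => exact mono (hmono hξ hζ hlt) (hmaps hξ) (hmaps hζ) (mods_subset hφ)
  | mp _ _ ihimp ihφ => exact mp ihimp ihφ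
  | nec hξ _ ih => exact nec (hmaps hξ) ih

theorem exists_strictMono_leftInvOn.{u} {M : Set Ordinal.{u}} {s : Ordinal.{u} → Ordinal.{u}}
    (hM : BddAbove M) (hmono : StrictMonoOn s M) (hlower : IsLowerSet (s '' M)) :
    ∃ t : Ordinal.{u} → Ordinal.{u}, StrictMono t ∧ Set.LeftInvOn t s M := by
  classical
  obtain ⟨b, hb⟩ := hM
  -- Beyond the initial segment `s(M)`, shifting by `b + 1` keeps the values above all of `M`.
  let t := (s '' M).piecewise (Function.invFunOn s M) (fun x => b + 1 + x)
  have t_leftInv : Set.LeftInvOn t s M := fun a ha =>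
    (Set.piecewise_eq_of_mem _ _ _ (Set.mem_image_of_mem s ha)).trans
      (hmono.injOn.leftInvOn_invFunOn ha)
  have t_of_notMem {x : Ordinal} (hx : x ∉ s '' M) : t x = b + 1 + x :=
    Set.piecewise_eq_of_notMem _ _ _ hx
  refine ⟨t, fun x y hxy => ?_, t_leftInv⟩
  by_cases hy : y ∈ s '' M
  · obtain ⟨a, ha, rfl⟩ := hlower hxy.le hy
    obtain ⟨c, hc, rfl⟩ := hy
    rw [t_leftInv ha, t_leftInv hc]
    exact (hmono.lt_iff_lt ha hc).1 hxy
  by_cases hx : x ∈ s '' M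
  · obtain ⟨a, ha, rfl⟩ := hx
    calc t (s a)
      _ = a := t_leftInv ha
      _ < b + 1 := Order.lt_add_one_iff.2 (hb ha)
      _ ≤ b + 1 + y := le_self_add
      _ = t y := (t_of_notMem hy).symm
  · rw [t_of_notMem hx, t_of_notMem hy]
    gcongr

theorem promotion_general {S : Set Ordinal} {φ : GLPFormula} {s : Ordinal → Ordinal}
    (hmono : StrictMonoOn s φ.mods) (hlower : IsLowerSet (s '' φ.mods))
    (h : GLPProof S (relabel s φ)) : GLPProves φ := by
  obtain ⟨t, t_strictMono, t_leftInv⟩ :=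
    exists_strictMono_leftInvOn φ.finite_mods.bddAbove hmono hlower
  rw [← GLPFormula.relabel_relabel_of_leftInvOn t_leftInv]
  exact h.relabel (t_strictMono.strictMonoOn S) (Set.mapsTo_univ t S)

/-- Promotion: if `s` is the strictly increasing enumeration of the modality indices
of `φ ∧ ψ` and `⊢_{GLP_ω} φ̄ → ψ̄`, then `⊢_GLP φ → ψ`. -/
theorem promotion (φ ψ : GLPFormula) (s : Ordinal → ℕ)
    (hmono : ∀ a ∈ (φ.and ψ).mods, ∀ b ∈ (φ.and ψ).mods, a < b → s a < s b)
    (henum : s '' (φ.and ψ).mods = Set.Iio ((φ.and ψ).mods.ncard))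
    (h : GLPomegaProves ((relabel (fun ξ => ((s ξ : ℕ) : Ordinal)) φ).imp
      (relabel (fun ξ => ((s ξ : ℕ) : Ordinal)) ψ))) :
    GLPProves (φ.imp ψ) := by
  refine promotion_general (φ := φ.imp ψ) (s := fun ξ => (s ξ : Ordinal))
    (fun a ha b hb hab => Nat.cast_lt.2 (hmono a ha b hb hab)) ?_ h
  change IsLowerSet ((fun ξ => (s ξ : Ordinal)) '' (φ.and ψ).mods)
  rw [← Set.image_image, henum, Ordinal.natCast_image_Iio]
  exact isLowerSet_Iio _
end

section
/- (Transfinite reduction property) Let γ < ζ be ordinals, let τ be a set of worms such that every worm ⟨γ⟩C with C ∈ τ has all its modality indices strictly less than ζ, and write ⟨γ⟩τ := { ⟨γ⟩C : C ∈ τ }. Assume ⟨γ⟩τ is <_γ-cofinal in ⟨ζ⟩⊤, in the sense that for every worm B whose modality indices all lie in the interval [γ, ζ) one has ⟨γ⟩τ ⊢_GLP ⟨γ⟩B. Then for every GLP formula ψ, the formula ⟨ζ⟩ψ is γ-conservative over the set { Q(⟨γ⟩C, ψ) : C ∈ τ }; that is, for every formula φ, ⟨ζ⟩ψ ⊢_GLP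 ⟨γ⟩φ if and only if { Q(⟨γ⟩C, ψ) : C ∈ τ } ⊢_GLP ⟨γ⟩φ. -/
/-!
Work in the canonical model: worlds are Boolean valuations forcing every theorem of GLP, and by
strong completeness derivability from a set is truth in all worlds that force the set.

* Relativizing every modality to `ψ` preserves theoremhood and turns the worm `A` into `Q(A, ψ)`.
  Hence a derivation witnessing cofinality of `⟨γ⟩τ` becomes one between the formulas `Q(⟨γ⟩C, ψ)`.
* A world that is `ξ`-accessible from itself for all `ξ < ζ` is `ζ`-accessible from some world, so
  if `⟨ζ⟩ψ → ⟨γ⟩φ` is a theorem then `ψ → ⟨γ⟩φ` follows from the reflection principles `[ξ]a → a`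
  with `ξ < ζ`. By compactness finitely many of these, say `m`, suffice, all with `ξ ≤ δ` for some
  `δ ∈ [γ, ζ)`.
* A world where `[ξ]a → a` fails forces `[ξ]a`, so `a` holds at all its `δ`-successors: no instance
  fails twice along a `δ`-chain. By pigeonhole, one of any `m + 1` worlds in a `δ`-chain satisfies
  all `m` instances. Therefore `Q(⟨γ⟩⟨δ⟩ᵐ⊤, ψ)` implies `⟨γ⟩φ`, and cofinality applies to the worm
  `⟨γ⟩⟨δ⟩ᵐ⊤`.
-/

section GLP

open GLPFormula

/-! ### Propositional reasoning in GLP -/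

/-- A truth assignment to GLP formulas that respects the Boolean connectives; variables and boxed
formulas are independent atoms. -/
structure IsValuation (F : GLPFormula → Prop) : Prop where
  top : F top
  neg (a : GLPFormula) : F a.neg ↔ ¬F a
  and (a b : GLPFormula) : F (a.and b) ↔ F a ∧ F b
  imp (a b : GLPFormula) : F (a.imp b) ↔ (F a → F b)

theorem isTautology_iff_forall_isValuation {a : GLPFormula} :
    IsTautology a ↔ ∀ F, IsValuation F → F a := by
  classical
  constructor
  · intro h F hF
    simpa using h (fun b => decide (F b)) (by simpa using hF.top) (by simp [hF.neg])
      (by simp [hF.and]) (by simp [hF.imp, imp_iff_not_or])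
  · intro h v htop hneg hand himp
    exact h (fun b => v b = true) ⟨htop, by simp [hneg], by simp [hand],
      by simp [himp, imp_iff_not_or]⟩

theorem IsValuation.listConj_iff {F : GLPFormula → Prop} (hF : IsValuation F)
    (l : List GLPFormula) :
    F (listConj l) ↔ ∀ a ∈ l, F a := by
  induction l with
  | nil => simp [listConj, hF.top]
  | cons a l ih => simp [listConj, hF.and, ih]

theorem GLPProves.of_forall_isValuation {a : GLPFormula} (h : ∀ F, IsValuation F → F a) :
    GLPProves a :=
  .taut (Set.subset_univ _) (isTautology_iff_forall_isValuation.2 h)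

theorem SetProves.of_proves {τ : Set GLPFormula} {a : GLPFormula} (h : GLPProves a) :
    SetProves Set.univ τ a :=
  ⟨[], by simp, .mp (GLPProves.of_forall_isValuation fun F hF => by
    simp only [hF.imp]; tauto) h⟩

theorem SetProves.of_mem {τ : Set GLPFormula} {a : GLPFormula} (h : a ∈ τ) :
    SetProves Set.univ τ a :=
  ⟨[a], by simpa using h, GLPProves.of_forall_isValuation fun F hF => by
    simp [hF.imp, hF.listConj_iff]⟩

theorem SetProves.mp {τ : Set GLPFormula} {a b : GLPFormula}
    (hab : SetProves Set.univ τ (a.imp b)) (ha : SetProves Set.univ τ a) :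
    SetProves Set.univ τ b := by
  obtain ⟨l, hl, hab⟩ := hab
  obtain ⟨m, hm, ha⟩ := ha
  refine ⟨l ++ m, by simpa [or_imp, forall_and] using ⟨hl, hm⟩, .mp (.mp
    (GLPProves.of_forall_isValuation fun F hF => ?_) hab) ha⟩
  simp only [hF.imp, hF.listConj_iff, List.mem_append, or_imp, forall_and]
  tauto

theorem SetProves.of_forall_isValuation {τ : Set GLPFormula} {χ : GLPFormula}
    (l : List GLPFormula) (hl : ∀ a ∈ l, SetProves Set.univ τ a)
    (h : ∀ F, IsValuation F → (∀ a ∈ l, F a) → F χ) : SetProves Set.univ τ χ := by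
  induction l generalizing χ with
  | nil => exact .of_proves (.of_forall_isValuation (by simpa using h))
  | cons a l ih =>
    rw [List.forall_mem_cons] at hl
    refine (ih hl.2 fun F hF hFl => ?_).mp hl.1
    exact (hF.imp _ _).2 fun ha => h F hF (List.forall_mem_cons.2 ⟨ha, hFl⟩)

/-! ### The canonical model -/

/-- A world of the canonical model of GLP: a complete consistent theory, given by the formulas it
forces. -/
structure GLPWorld where
  Forces : GLPFormula → Prop
  isValuation : IsValuation Forces
  forces_of_proves {a : GLPFormula} : GLPProves a → Forces a

infix:50 " ⊩ " => GLPWorld.Forces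

-- An ultraproduct of valuations, each of which satisfies finitely many consequences of `τ`.
theorem exists_world_of_not_setProves {τ : Set GLPFormula} {χ : GLPFormula}
    (h : ¬SetProves Set.univ τ χ) : ∃ w : GLPWorld, (∀ a ∈ τ, w ⊩ a) ∧ ¬w ⊩ χ := by
  have exists_valuation (s : Finset GLPFormula) :
      ∃ F, IsValuation F ∧ (∀ a ∈ s, SetProves Set.univ τ a → F a) ∧ ¬F χ := by
    classical
    by_contra! hs
    refine h (.of_forall_isValuation (s.filter (SetProves Set.univ τ)).toList (by simp) ?_)
    exact fun F hF hFs => hs F hF (by simpa using hFs)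
  choose F hF hFτ hFχ using exists_valuation
  let U : Ultrafilter (Finset GLPFormula) := .of .atTop
  have eventually_of_setProves {a : GLPFormula} (ha : SetProves Set.univ τ a) :
      ∀ᶠ s in U, F s a :=
    Ultrafilter.of_le _ <| (Filter.eventually_ge_atTop {a}).mono fun s hs =>
      hFτ s a (Finset.singleton_subset_iff.1 hs) ha
  let w : GLPWorld :=
    { Forces := fun a => ∀ᶠ s in U, F s a
      isValuation :=
        { top := .of_forall fun s => (hF s).top
          neg := by simp only [(hF _).neg, Ultrafilter.eventually_not, implies_true]
          and := by simp only [(hF _).and, Filter.eventually_and, implies_true]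
          imp := by simp only [(hF _).imp, Ultrafilter.eventually_imp, implies_true] }
      forces_of_proves := fun ha => eventually_of_setProves (.of_proves ha) }
  refine ⟨w, fun a ha => eventually_of_setProves (.of_mem ha), fun hχ => ?_⟩
  obtain ⟨s, hs⟩ := hχ.exists
  exact hFχ s hs

theorem setProves_iff_forall_world {τ : Set GLPFormula} {χ : GLPFormula} :
    SetProves Set.univ τ χ ↔ ∀ w : GLPWorld, (∀ a ∈ τ, w ⊩ a) → w ⊩ χ := by
  refine ⟨?_, fun h => ?_⟩
  · rintro ⟨l, hl, h⟩ w hw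
    refine (w.isValuation.imp _ _).1 (w.forces_of_proves h) ((w.isValuation.listConj_iff l).2 ?_)
    exact fun a ha => hw a (hl a ha)
  · by_contra hχ
    obtain ⟨w, hw, hwχ⟩ := exists_world_of_not_setProves hχ
    exact hwχ (h w hw)

theorem proves_iff_forall_world {χ : GLPFormula} : GLPProves χ ↔ ∀ w : GLPWorld, w ⊩ χ := by
  refine ⟨fun h w => w.forces_of_proves h, fun h => ?_⟩
  obtain ⟨l, hl, hχ⟩ := setProves_iff_forall_world (τ := ∅).2 fun w _ => h w
  obtain rfl := List.eq_nil_iff_forall_not_mem.2 hl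
  exact .mp hχ (GLPProves.of_forall_isValuation fun F hF => hF.top)

theorem SetProves.exists_finset {τ : Set GLPFormula} {χ : GLPFormula}
    (h : SetProves Set.univ τ χ) :
    ∃ s : Finset GLPFormula, ↑s ⊆ τ ∧ SetProves Set.univ (s : Set GLPFormula) χ := by
  classical
  obtain ⟨l, hl, h⟩ := h
  exact ⟨l.toFinset, fun a ha => hl a (by simpa using ha), l, by simp, h⟩

namespace GLPWorld

variable {w u v : GLPWorld} {ξ ζ : Ordinal} {a b : GLPFormula}

@[simp] theorem forces_top : w ⊩ top := w.isValuation.top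

@[simp] theorem forces_neg : w ⊩ a.neg ↔ ¬w ⊩ a := w.isValuation.neg a

@[simp] theorem forces_and : w ⊩ a.and b ↔ w ⊩ a ∧ w ⊩ b := w.isValuation.and a b

@[simp] theorem forces_imp : w ⊩ a.imp b ↔ (w ⊩ a → w ⊩ b) := w.isValuation.imp a b

theorem forces_mp (h : GLPProves (a.imp b)) (ha : w ⊩ a) : w ⊩ b :=
  forces_imp.1 (w.forces_of_proves h) ha

/-- The accessibility relation of `[ξ]` in the canonical model. -/
def Access (ξ : Ordinal) (w u : GLPWorld) : Prop := ∀ a, w ⊩ box ξ a → u ⊩ a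

theorem forces_box_mp (hab : w ⊩ box ξ (a.imp b)) (ha : w ⊩ box ξ a) : w ⊩ box ξ b :=
  forces_imp.1 (forces_mp (.distr trivial (Set.subset_univ _) (Set.subset_univ _)) hab) ha

theorem forces_box_of_setProves (h : SetProves Set.univ {b | w ⊩ box ξ b} a) : w ⊩ box ξ a := by
  obtain ⟨l, hl, h⟩ := h
  induction l generalizing a with
  | nil => exact w.forces_of_proves (.nec trivial (.mp h
      (GLPProves.of_forall_isValuation fun F hF => hF.top)))
  | cons b l ih =>
    rw [List.forall_mem_cons] at hl
    refine forces_box_mp (ih hl.2 (.mp (GLPProves.of_forall_isValuation fun F hF => ?_) h)) hl.1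
    simp only [hF.imp, listConj, hF.and]
    tauto

theorem forces_box : w ⊩ box ξ a ↔ ∀ u, Access ξ w u → u ⊩ a :=
  ⟨fun h _ hu => hu a h, fun h =>
    forces_box_of_setProves (setProves_iff_forall_world.2 fun u hu => h u hu)⟩

theorem forces_dia : w ⊩ dia ξ a ↔ ∃ u, Access ξ w u ∧ u ⊩ a := by
  simp [dia, forces_box]

theorem forces_box_of_lob (h : ∀ u, Access ξ w u → u ⊩ box ξ a → u ⊩ a) : w ⊩ box ξ a :=
  forces_mp (.lob trivial (Set.subset_univ _)) (forces_box.2 (by simpa using h))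

theorem Access.trans (hwu : Access ξ w u) (huv : Access ξ u v) : Access ξ w v :=
  fun a ha => huv a (hwu _ (forces_mp (.trans trivial (Set.subset_univ _)) ha))

theorem forces_dia_of_le (h : ξ ≤ ζ) (ha : w ⊩ dia ζ a) : w ⊩ dia ξ a := by
  obtain rfl | h := h.eq_or_lt
  · exact ha
  · exact forces_mp (.negIntro h trivial trivial (Set.subset_univ _)) ha

theorem Access.of_le (h : ξ ≤ ζ) (hwu : Access ζ w u) : Access ξ w u := by
  intro a ha
  by_contra hua
  obtain ⟨v, hwv, hva⟩ := forces_dia.1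
    (forces_dia_of_le h (forces_dia.2 ⟨u, hwu, forces_neg.2 hua⟩))
  exact forces_neg.1 hva (hwv a ha)

theorem Access.forces_dia_of_lt (h : ξ < ζ) (hwu : Access ζ w u) (ha : w ⊩ dia ξ a) :
    u ⊩ dia ξ a :=
  hwu _ (forces_mp (.mono h trivial trivial (Set.subset_univ _)) ha)

theorem Access.euclidean_of_lt (h : ξ < ζ) (hwu : Access ζ w u) (hwv : Access ξ w v) :
    Access ξ u v := by
  intro a ha
  by_contra hva
  obtain ⟨t, hut, hta⟩ := forces_dia.1
    (hwu.forces_dia_of_lt h (forces_dia.2 ⟨v, hwv, forces_neg.2 hva⟩))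
  exact forces_neg.1 hta (hut a ha)

theorem Access.forces_dia_of_forces_dia (hwu : Access ξ w u) (ha : u ⊩ dia ξ a) : w ⊩ dia ξ a := by
  obtain ⟨v, huv, hva⟩ := forces_dia.1 ha
  exact forces_dia.2 ⟨v, hwu.trans huv, hva⟩

end GLPWorld

/-! ### Relativization -/

/-- The relativization of a formula to `ψ`: every modality only quantifies over worlds that
force `ψ`. -/
def GLPFormula.relativize : GLPFormula → GLPFormula → GLPFormula
  | var n, _ => var n
  | top, _ => top
  | neg a, ψ => neg (a.relativize ψ)
  | .and a b, ψ => .and (a.relativize ψ) (b.relativize ψ)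
  | imp a b, ψ => imp (a.relativize ψ) (b.relativize ψ)
  | box ξ a, ψ => box ξ (ψ.imp (a.relativize ψ))

namespace GLPWorld

variable {w : GLPWorld} {ξ ζ : Ordinal} {a ψ : GLPFormula}

theorem forces_relativize_box :
    w ⊩ (box ξ a).relativize ψ ↔ ∀ u, Access ξ w u → u ⊩ ψ → u ⊩ a.relativize ψ := by
  simp [GLPFormula.relativize, forces_box]

theorem forces_relativize_dia :
    w ⊩ (dia ξ a).relativize ψ ↔ ∃ u, Access ξ w u ∧ u ⊩ ψ ∧ u ⊩ a.relativize ψ := by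
  simp [GLPFormula.relativize, dia, forces_box]

theorem isValuation_relativize (w : GLPWorld) (ψ : GLPFormula) :
    IsValuation fun a => w ⊩ a.relativize ψ := by
  constructor <;> simp [GLPFormula.relativize]

theorem forces_relativize_of_proves (h : GLPProves a) (w : GLPWorld) : w ⊩ a.relativize ψ := by
  unfold GLPProves at h
  have imp_iff (w : GLPWorld) := (w.isValuation_relativize ψ).imp
  induction h generalizing w with
  | taut _ h => exact isTautology_iff_forall_isValuation.1 h _ (w.isValuation_relativize ψ)
  | distr =>
    simp only [imp_iff, forces_relativize_box]
    exact fun hab ha u hu hψ => hab u hu hψ (ha u hu hψ)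
  | trans =>
    simp only [imp_iff, forces_relativize_box]
    exact fun ha u hu _ v hv => ha v (hu.trans hv)
  | lob =>
    refine (imp_iff w _ _).2 fun h => forces_box_of_lob fun u hu hbox => forces_imp.2 fun hψ => ?_
    exact (imp_iff u _ _).1 (forces_relativize_box.1 h u hu hψ) hbox
  | negIntro h =>
    simp only [imp_iff, forces_relativize_dia]
    exact fun ⟨u, hu, hψ, ha⟩ => ⟨u, hu.of_le h.le, hψ, ha⟩
  | mono h =>
    simp only [imp_iff, forces_relativize_box, forces_relativize_dia]
    exact fun ⟨u, hu, ha⟩ v hv _ => ⟨u, hv.euclidean_of_lt h hu, ha⟩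
  | mp _ _ hab ha => exact (imp_iff w _ _).1 (hab w) (ha w)
  | nec _ _ ha => exact forces_relativize_box.2 fun u _ _ => ha u

/-- The world at which a formula is forced when its relativization to `ψ` is forced at `w`. -/
def relativize (w : GLPWorld) (ψ : GLPFormula) : GLPWorld where
  Forces a := w ⊩ a.relativize ψ
  isValuation := w.isValuation_relativize ψ
  forces_of_proves h := forces_relativize_of_proves h w

theorem forces_QWorm_cons {A : List Ordinal} :
    w ⊩ QWorm (ξ :: A) ψ ↔ ∃ u, Access ξ w u ∧ u ⊩ ψ ∧ u ⊩ QWorm A ψ := by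
  simp [QWorm, forces_dia]

theorem relativize_forces_wormFormula {A : List Ordinal} :
    w.relativize ψ ⊩ wormFormula A ↔ w ⊩ QWorm A ψ := by
  change w ⊩ (wormFormula A).relativize ψ ↔ w ⊩ QWorm A ψ
  induction A generalizing w with
  | nil => rfl
  | cons ξ A ih => simp only [wormFormula, forces_relativize_dia, forces_QWorm_cons, ih]

/-! ### Adding a root below a world -/

/-- Truth at a new root from which, for `ξ ≤ ζ`, the `ξ`-accessible worlds are `w` and its
`ξ`-successors, and from which no world is `ξ`-accessible for `ξ > ζ`. -/
def ForcesAtRoot (ζ : Ordinal) (w : GLPWorld) : GLPFormula → Prop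
  | var n => w ⊩ var n
  | top => True
  | neg a => ¬ForcesAtRoot ζ w a
  | .and a b => ForcesAtRoot ζ w a ∧ ForcesAtRoot ζ w b
  | imp a b => ForcesAtRoot ζ w a → ForcesAtRoot ζ w b
  | box ξ a => ξ ≤ ζ → w ⊩ a ∧ w ⊩ box ξ a

theorem isValuation_forcesAtRoot (ζ : Ordinal) (w : GLPWorld) : IsValuation (ForcesAtRoot ζ w) := by
  constructor <;> simp [ForcesAtRoot]

theorem forcesAtRoot_dia : ForcesAtRoot ζ w (dia ξ a) ↔ ξ ≤ ζ ∧ (w ⊩ a ∨ w ⊩ dia ξ a) := by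
  simp only [ForcesAtRoot, dia, forces_neg]
  tauto

theorem forcesAtRoot_of_proves (hw : ∀ ξ < ζ, Access ξ w w) (h : GLPProves a) :
    ForcesAtRoot ζ w a := by
  unfold GLPProves at h
  have imp_iff := (isValuation_forcesAtRoot ζ w).imp
  induction h with
  | taut _ h => exact isTautology_iff_forall_isValuation.1 h _ (isValuation_forcesAtRoot ζ w)
  | distr =>
    intro hab ha hξ
    exact ⟨forces_imp.1 (hab hξ).1 (ha hξ).1, forces_box_mp (hab hξ).2 (ha hξ).2⟩
  | trans =>
    intro ha hξ
    exact ⟨(ha hξ).2, forces_box.2 fun u hu => forces_box.2 fun v hv =>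
      forces_box.1 (ha hξ).2 v (hu.trans hv)⟩
  | lob =>
    intro h hξ
    obtain ⟨hw, hbox⟩ := h hξ
    have ha := forces_box_of_lob fun u hu => forces_imp.1 (forces_box.1 hbox u hu)
    exact ⟨forces_imp.1 hw ha, ha⟩
  | negIntro h =>
    rw [imp_iff, forcesAtRoot_dia, forcesAtRoot_dia]
    exact fun ⟨hζ, ha⟩ => ⟨h.le.trans hζ, ha.imp_right (forces_dia_of_le h.le)⟩
  | mono h =>
    rw [imp_iff, forcesAtRoot_dia]
    rintro ⟨-, ha⟩ hζ
    have hdia := ha.elim (fun ha => forces_dia.2 ⟨w, hw _ (h.trans_le hζ), ha⟩) id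
    exact ⟨hdia, forces_box.2 fun u hu => hu.forces_dia_of_lt h hdia⟩
  | mp _ _ hab ha => exact hab ha
  | nec _ ha => exact fun _ => ⟨w.forces_of_proves ha, w.forces_of_proves (.nec trivial ha)⟩

theorem exists_access_of_forall_lt_access_self (hw : ∀ ξ < ζ, Access ξ w w) :
    ∃ r, Access ζ r w :=
  ⟨⟨ForcesAtRoot ζ w, isValuation_forcesAtRoot ζ w, forcesAtRoot_of_proves hw⟩,
    fun _ ha => (ha le_rfl).1⟩

end GLPWorld

/-! ### Reflection along chains -/

/-- The reflection principles `[ξ]a → a` with `ξ ≤ δ`. -/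
def reflections (δ : Ordinal) : Set GLPFormula := {χ | ∃ ξ ≤ δ, ∃ a, χ = (box ξ a).imp a}

theorem reflections_mono : Monotone reflections :=
  fun _ _ h _ ⟨ξ, hξ, ha⟩ => ⟨ξ, hξ.trans h, ha⟩

open GLPWorld in
theorem exists_finset_reflections_of_proves {γ ζ : Ordinal} {φ ψ : GLPFormula} (hγζ : γ < ζ)
    (h : GLPProves ((dia ζ ψ).imp (dia γ φ))) :
    ∃ δ, γ ≤ δ ∧ δ < ζ ∧ ∃ s : Finset GLPFormula, ↑s ⊆ reflections δ ∧
      ∀ w : GLPWorld, (∀ a ∈ s, w ⊩ a) → w ⊩ ψ → w ⊩ dia γ φ := by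
  have reflections_prove :
      SetProves Set.univ (⋃ δ ∈ Set.Ico γ ζ, reflections δ) (ψ.imp (dia γ φ)) := by
    refine setProves_iff_forall_world.2 fun w hw => forces_imp.2 fun hψ => ?_
    have access_self (ξ) (hξ : ξ < ζ) : Access ξ w w := fun a => forces_imp.1 <| hw _ <|
      Set.mem_biUnion ⟨le_max_left γ ξ, max_lt hγζ hξ⟩ ⟨ξ, le_max_right γ ξ, a, rfl⟩
    obtain ⟨r, hr⟩ := exists_access_of_forall_lt_access_self access_self
    exact hr.forces_dia_of_lt hγζ (forces_mp h (forces_dia.2 ⟨w, hr, hψ⟩))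
  obtain ⟨s, hs, hsφ⟩ := reflections_prove.exists_finset
  obtain ⟨δ, ⟨hγδ, hδζ⟩, hsδ⟩ := DirectedOn.exists_mem_subset_of_finset_subset_biUnion
    (Set.nonempty_Ico.2 hγζ)
    ((DirectedOn.of_linearOrder _).mono fun _ _ h => reflections_mono h) hs
  exact ⟨δ, hγδ, hδζ, s, hsδ, fun w hw => forces_imp.1 (setProves_iff_forall_world.1 hsφ w hw)⟩

namespace GLPWorld

variable {w u : GLPWorld} {γ δ ζ : Ordinal} {φ ψ : GLPFormula}

theorem exists_forces_reflections {s : Finset GLPFormula} (hs : ↑s ⊆ reflections δ) (hγδ : γ ≤ δ)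
    (hw : w ⊩ QWorm (γ :: List.replicate s.card δ) ψ) :
    ∃ u, Access γ w u ∧ u ⊩ ψ ∧ ∀ a ∈ s, u ⊩ a := by
  classical
  induction s using Finset.strongInduction generalizing w γ with
  | H s ih =>
    obtain ⟨v, hwv, hψ, hv⟩ := forces_QWorm_cons.1 hw
    by_cases hvs : ∀ a ∈ s, v ⊩ a
    · exact ⟨v, hwv, hψ, hvs⟩
    push Not at hvs
    obtain ⟨_, has, hva⟩ := hvs
    obtain ⟨ξ, hξ, a, rfl⟩ := hs has
    rw [← Finset.card_erase_add_one has, List.replicate_succ] at hv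
    obtain ⟨u, hvu, hψu, hu⟩ := ih _ (Finset.erase_ssubset has)
      ((Finset.coe_subset.2 (Finset.erase_subset _ _)).trans hs) le_rfl hv
    have hua : u ⊩ (box ξ a).imp a :=
      forces_imp.2 fun _ => hvu.of_le hξ a (by rw [forces_imp] at hva; tauto)
    refine ⟨u, hwv.trans (hvu.of_le hγδ), hψu, fun b hb => ?_⟩
    obtain rfl | hne := eq_or_ne b ((box ξ a).imp a)
    · exact hua
    · exact hu b (Finset.mem_erase.2 ⟨hne, hb⟩)

theorem exists_worm_forces_dia_of_proves (hγζ : γ < ζ)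
    (h : GLPProves ((dia ζ ψ).imp (dia γ φ))) :
    ∃ B : List Ordinal, (∀ ξ ∈ B, γ ≤ ξ ∧ ξ < ζ) ∧
      ∀ w, w ⊩ QWorm (γ :: B) ψ → w ⊩ dia γ φ := by
  obtain ⟨δ, hγδ, hδζ, s, hs, hsφ⟩ := exists_finset_reflections_of_proves hγζ h
  refine ⟨List.replicate s.card δ, fun ξ hξ => ?_, fun w hw => ?_⟩
  · rw [List.eq_of_mem_replicate hξ]
    exact ⟨hγδ, hδζ⟩
  · obtain ⟨u, hwu, hψ, hu⟩ := exists_forces_reflections hs hγδ hw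
    exact hwu.forces_dia_of_forces_dia (hsφ u hu hψ)

theorem Access.forces_QWorm {A : List Ordinal} (hwu : Access ζ w u) (hA : ∀ ξ ∈ A, ξ < ζ)
    (hw : w ⊩ QWorm A ψ) : u ⊩ QWorm A ψ := by
  cases A with
  | nil => exact forces_top
  | cons ξ A => exact hwu.forces_dia_of_lt (hA ξ List.mem_cons_self) hw

theorem forces_QWorm_of_forces_dia {A : List Ordinal} (hA : ∀ ξ ∈ A, ξ < ζ) (hw : w ⊩ dia ζ ψ) :
    w ⊩ QWorm A ψ := by
  induction A with
  | nil => exact forces_top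
  | cons ξ A ih =>
    rw [List.forall_mem_cons] at hA
    obtain ⟨u, hwu, hψ⟩ := forces_dia.1 hw
    exact forces_QWorm_cons.2 ⟨u, hwu.of_le hA.1.le, hψ, hwu.forces_QWorm hA.2 (ih hA.2)⟩

end GLPWorld

end GLP

/-- Transfinite reduction property: if `⟨γ⟩τ ⊆ Worms^{<ζ}` is `<_γ`-cofinal in `⟨ζ⟩⊤`,
then `⟨ζ⟩ψ` is `γ`-conservative over `{Q(⟨γ⟩C, ψ) : C ∈ τ}`. -/
theorem transfinite_reduction_property (γ ζ : Ordinal) (hγζ : γ < ζ)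
    (τ : Set (List Ordinal))
    (hbound : ∀ C ∈ τ, ∀ ξ ∈ C, ξ < ζ)
    (hcofinal : ∀ B : List Ordinal, (∀ ξ ∈ B, γ ≤ ξ ∧ ξ < ζ) →
      SetProves Set.univ {χ | ∃ C ∈ τ, χ = wormFormula (γ :: C)} (wormFormula (γ :: B)))
    (ψ φ : GLPFormula) :
    GLPProves ((GLPFormula.dia ζ ψ).imp (GLPFormula.dia γ φ)) ↔
      SetProves Set.univ {χ | ∃ C ∈ τ, χ = QWorm (γ :: C) ψ}
        (GLPFormula.dia γ φ) := by
  constructor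
  · intro h
    obtain ⟨B, hB, hBφ⟩ := GLPWorld.exists_worm_forces_dia_of_proves hγζ h
    refine setProves_iff_forall_world.2 fun w hw => hBφ w ?_
    have relativized_worms : ∀ χ ∈ {χ | ∃ C ∈ τ, χ = wormFormula (γ :: C)},
        w.relativize ψ ⊩ χ := by
      rintro _ ⟨C, hC, rfl⟩
      exact GLPWorld.relativize_forces_wormFormula.2 (hw _ ⟨C, hC, rfl⟩)
    exact GLPWorld.relativize_forces_wormFormula.1
      (setProves_iff_forall_world.1 (hcofinal B hB) _ relativized_worms)
  · intro h
    refine proves_iff_forall_world.2 fun w => GLPWorld.forces_imp.2 fun hw => ?_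
    refine setProves_iff_forall_world.1 h w ?_
    rintro _ ⟨C, hC, rfl⟩
    have index_lt : ∀ ξ ∈ γ :: C, ξ < ζ := List.forall_mem_cons.2 ⟨hγζ, hbound C hC⟩
    exact GLPWorld.forces_QWorm_of_forces_dia index_lt hw
end
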